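/- arXiv:1907.07447 — 2 statements merged into one kernel-verified Lean document; each statement's English description precedes it below -/
import Mathlib

section
/- With the special parameter choice 2α_j/α_{j−1} = √((j−1)(N−j+1)) for j = 2,…,N, let P(·,n) be the monic MVOPs of the weight W(x) = e^{−x²}L(x)L(x)* with squared norms ℋ(n). Then for every n ≥ 2 and every x ∈ ℝ, P'(x,n) = n P(x,n−1) + ℋ(n) A* ℋ(n−2)⁻¹ P(x,n−2); i.e. the differential operator ∂_x belongs to the right Fourier algebra and the coefficient M_{−2}(n) in the relation P'(x,n) = nP(x,n−1) + M_{−2}(n)P(x,n−2) equals ℋ(n)A*ℋ(n−2)⁻¹. -/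
open MeasureTheory Matrix Finset
open scoped ComplexOrder

/-- The physicists' Hermite polynomials, as functions on `ℝ`:
`H_0 = 1`, `H_1(x) = 2x`, `H_{m+1}(x) = 2x H_m(x) − 2m H_{m−1}(x)`. -/
noncomputable def hermiteF : ℕ → ℝ → ℝ
  | 0, _ => 1
  | 1, x => 2 * x
  | (m + 2), x => 2 * x * hermiteF (m + 1) x - 2 * (m + 1) * hermiteF m x

/-- Entrywise integral of a matrix-valued function on `ℝ`. -/
noncomputable def matInt (N : ℕ) (F : ℝ → Matrix (Fin N) (Fin N) ℂ) :
    Matrix (Fin N) (Fin N) ℂ :=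
  Matrix.of fun i j => ∫ y : ℝ, F y i j

/-- Entrywise derivative of a matrix-valued function on `ℝ`. -/
noncomputable def matDeriv (N : ℕ) (F : ℝ → Matrix (Fin N) (Fin N) ℂ) (x : ℝ) :
    Matrix (Fin N) (Fin N) ℂ :=
  Matrix.of fun i j => deriv (fun y => F y i j) x

/-- `F` is a matrix polynomial of degree `n` with leading coefficient the identity. -/
def IsMonicMatPoly (N n : ℕ) (F : ℝ → Matrix (Fin N) (Fin N) ℂ) : Prop :=
  ∃ c : ℕ → Matrix (Fin N) (Fin N) ℂ, c n = 1 ∧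
    ∀ x : ℝ, F x = ∑ k ∈ Finset.range (n + 1), ((x : ℂ) ^ k) • c k

/-- The matrix-valued inner product `⟨H, G⟩ = ∫ H(y) W(y) G(y)* dy`. -/
noncomputable def matIP (N : ℕ) (W H G : ℝ → Matrix (Fin N) (Fin N) ℂ) :
    Matrix (Fin N) (Fin N) ℂ :=
  matInt N fun y => H y * W y * (G y)ᴴ

/-- The lower triangular matrix `L(x)` with entries
`L(x)_{jk} = (H_{j−k}(x)/(j−k)!)·(α_j/α_k)` for `j ≥ k` (here `0`-based indices). -/
noncomputable def Lmat (N : ℕ) (α : Fin N → ℝ) (x : ℝ) : Matrix (Fin N) (Fin N) ℂ :=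
  Matrix.of fun j k =>
    if (k : ℕ) ≤ (j : ℕ) then
      ((hermiteF ((j : ℕ) - (k : ℕ)) x / Nat.factorial ((j : ℕ) - (k : ℕ)) *
          (α j / α k) : ℝ) : ℂ)
    else 0

/-- The Hermite-type matrix weight `W(x) = e^{−x²} L(x)L(x)*`. -/
noncomputable def hermW (N : ℕ) (α : Fin N → ℝ) (x : ℝ) : Matrix (Fin N) (Fin N) ℂ :=
  Real.exp (-x ^ 2) • (Lmat N α x * (Lmat N α x)ᴴ)

/-- The nilpotent shift matrix `A` with `A_{j,j−1} = 2α_j/α_{j−1}` (1-based), i.e.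
(0-based) `A j k = 2 α_j / α_k` when `j = k + 1`. -/
noncomputable def Amat (N : ℕ) (α : Fin N → ℝ) : Matrix (Fin N) (Fin N) ℂ :=
  Matrix.of fun j k => if (j : ℕ) = (k : ℕ) + 1 then ((2 * α j / α k : ℝ) : ℂ) else 0

/-- The diagonal matrix `J = diag(1, 2, …, N)`. -/
def Jmat (N : ℕ) : Matrix (Fin N) (Fin N) ℂ :=
  Matrix.diagonal fun j => ((j : ℕ) + 1 : ℂ)

/-! ### Hermite functions on integer indices -/

noncomputable def hz (m : ℤ) (x : ℝ) : ℝ :=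
  if m < 0 then 0 else hermiteF m.toNat x / (Nat.factorial m.toNat : ℝ)

lemma hz_neg {m : ℤ} (h : m < 0) (x : ℝ) : hz m x = 0 := by simp [hz, h]

lemma hz_nat (m : ℕ) (x : ℝ) : hz m x = hermiteF m x / (Nat.factorial m : ℝ) := by
  simp [hz]

lemma hz_rec_nat (m : ℕ) (x : ℝ) :
    ((m : ℝ) + 2) * hz ((m + 2 : ℕ) : ℤ) x
      = 2 * x * hz ((m + 1 : ℕ) : ℤ) x - 2 * hz (m : ℤ) x := by
  rw [hz_nat, hz_nat, hz_nat, hermiteF, Nat.factorial_succ, Nat.factorial_succ]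
  have := Nat.factorial_ne_zero m
  push_cast
  have h1 : (m : ℝ) + 1 ≠ 0 := by positivity
  have h2 : (m : ℝ) + 1 + 1 ≠ 0 := by positivity
  field_simp
  ring

lemma hz_rec (m : ℤ) (x : ℝ) :
    (m : ℝ) * hz m x = 2 * x * hz (m - 1) x - 2 * hz (m - 2) x := by
  rcases lt_or_ge m 0 with h | h
  · rw [hz_neg h, hz_neg (by omega), hz_neg (by omega)]; ring
  · obtain ⟨n, rfl⟩ := Int.eq_ofNat_of_zero_le h
    match n with
    | 0 => rw [hz_neg (m := ((0 : ℕ) : ℤ) - 1) (by norm_num), hz_neg (m := ((0 : ℕ) : ℤ) - 2) (by norm_num)]; simp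
    | 1 =>
      rw [hz_neg (m := ((1 : ℕ) : ℤ) - 2) (by norm_num)]
      simp [hz, hermiteF]
    | k + 2 =>
      have := hz_rec_nat k x
      have e1 : ((k + 2 : ℕ) : ℤ) - 1 = ((k + 1 : ℕ) : ℤ) := by push_cast; ring
      have e2 : ((k + 2 : ℕ) : ℤ) - 2 = (k : ℤ) := by push_cast; ring
      rw [e1, e2, ← this]
      push_cast
      ring

lemma hermiteF_hasDerivAt (m : ℕ) (x : ℝ) :
    HasDerivAt (hermiteF (m + 1)) (2 * (m + 1) * hermiteF m x) x := by
  induction m using Nat.strong_induction_on with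
  | _ m ih =>
    match m with
    | 0 =>
      have : hermiteF (0 + 1) = fun x => 2 * x := by funext y; simp [hermiteF]
      rw [this]
      simpa [hermiteF] using (hasDerivAt_id x).const_mul 2
    | 1 =>
      have : hermiteF (1 + 1) = fun x => 2 * x * (2 * x) - 2 * (0 + 1) * 1 := by
        funext y; simp [hermiteF]
      rw [this]
      have h := (hasDerivAt_id x).const_mul 2
      have h2 := (h.mul h).sub_const (2 * (0 + 1) * 1)
      refine h2.congr_deriv ?_
      norm_num [hermiteF]
      try ring
    | k + 2 =>
      have e : hermiteF (k + 2 + 1)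
          = fun x => 2 * x * hermiteF (k + 2) x - 2 * (((k + 1 : ℕ) : ℝ) + 1) * hermiteF (k + 1) x := by
        funext y; rw [hermiteF]
      rw [e]
      have h := (hasDerivAt_id x).const_mul 2
      have h2 := (h.mul (ih (k + 1) (by omega))).sub
        ((ih k (by omega)).const_mul (2 * (((k + 1 : ℕ) : ℝ) + 1)))
      refine h2.congr_deriv ?_
      simp only [id, hermiteF]
      push_cast
      ring

lemma hz_hasDerivAt (m : ℤ) (x : ℝ) :
    HasDerivAt (fun y => hz m y) (2 * hz (m - 1) x) x := by
  rcases lt_or_ge m 0 with h | h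
  · rw [hz_neg (m := m - 1) (by omega)]
    have : (fun y => hz m y) = fun _ => 0 := by funext y; exact hz_neg h y
    rw [this]; simpa using hasDerivAt_const x (0 : ℝ)
  · obtain ⟨n, rfl⟩ := Int.eq_ofNat_of_zero_le h
    match n with
    | 0 =>
      rw [hz_neg (m := ((0 : ℕ) : ℤ) - 1) (by norm_num)]
      have : (fun y => hz ((0 : ℕ) : ℤ) y) = fun _ => 1 := by funext y; simp [hz, hermiteF]
      rw [this]; simpa using hasDerivAt_const x (1 : ℝ)
    | k + 1 =>
      have e1 : ((k + 1 : ℕ) : ℤ) - 1 = (k : ℤ) := by push_cast; ring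
      rw [e1, hz_nat]
      have : (fun y => hz ((k + 1 : ℕ) : ℤ) y)
          = fun y => hermiteF (k + 1) y / (Nat.factorial (k + 1) : ℝ) := by
        funext y; rw [hz_nat]
      rw [this]
      refine ((hermiteF_hasDerivAt k x).div_const _).congr_deriv ?_
      rw [Nat.factorial_succ]
      have := Nat.factorial_ne_zero k
      push_cast
      have h1 : (k : ℝ) + 1 ≠ 0 := by positivity
      field_simp

/-! ### Polynomial functions -/

def PF (f : ℝ → ℂ) : Prop := ∃ p : Polynomial ℂ, ∀ x : ℝ, f x = p.eval (x : ℂ)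

lemma PF.const (c : ℂ) : PF (fun _ => c) := ⟨Polynomial.C c, by simp⟩
lemma PF.id : PF (fun x => (x : ℂ)) := ⟨Polynomial.X, by simp⟩
lemma PF.add {f g : ℝ → ℂ} (hf : PF f) (hg : PF g) : PF (fun x => f x + g x) := by
  obtain ⟨p, hp⟩ := hf; obtain ⟨q, hq⟩ := hg
  exact ⟨p + q, fun x => by simp [hp, hq]⟩
lemma PF.mul {f g : ℝ → ℂ} (hf : PF f) (hg : PF g) : PF (fun x => f x * g x) := by
  obtain ⟨p, hp⟩ := hf; obtain ⟨q, hq⟩ := hg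
  exact ⟨p * q, fun x => by simp [hp, hq]⟩
lemma PF.sub {f g : ℝ → ℂ} (hf : PF f) (hg : PF g) : PF (fun x => f x - g x) := by
  obtain ⟨p, hp⟩ := hf; obtain ⟨q, hq⟩ := hg
  exact ⟨p - q, fun x => by simp [hp, hq]⟩
lemma PF.sum {ι : Type*} (s : Finset ι) {f : ι → ℝ → ℂ} (hf : ∀ i, PF (f i)) :
    PF (fun x => ∑ i ∈ s, f i x) := by
  choose p hp using hf
  exact ⟨∑ i ∈ s, p i, fun x => by simp [hp, Polynomial.eval_finsetSum]⟩
lemma PF.pow (k : ℕ) : PF (fun x => (x : ℂ) ^ k) := ⟨Polynomial.X ^ k, by simp⟩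
lemma PF.star {f : ℝ → ℂ} (hf : PF f) : PF (fun x => star (f x)) := by
  obtain ⟨p, hp⟩ := hf
  refine ⟨p.map (starRingEnd ℂ), fun x => ?_⟩
  beta_reduce
  rw [hp]
  conv_rhs => rw [← Complex.conj_ofReal x, Polynomial.eval_map, Polynomial.eval₂_hom]
  simp

lemma PF.integrable {f : ℝ → ℂ} (hf : PF f) :
    Integrable (fun x : ℝ => ((Real.exp (-x ^ 2) : ℝ) : ℂ) * f x) := by
  obtain ⟨p, hp⟩ := hf
  simp only [hp]
  clear hp
  induction p using Polynomial.induction_on' with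
  | add p q hp' hq' =>
    simp only [Polynomial.eval_add, mul_add]
    exact hp'.add hq'
  | monomial n a =>
    have h := integrable_rpow_mul_exp_neg_mul_sq (b := 1) one_pos (s := (n : ℝ))
      (by have : (0 : ℝ) ≤ n := by positivity
          linarith)
    have h2 := (h.ofReal (𝕜 := ℂ)).const_mul a
    refine h2.congr (Filter.Eventually.of_forall fun x => ?_)
    simp
    ring

lemma PF.hermite (m : ℕ) : PF (fun x => ((hermiteF m x : ℝ) : ℂ)) := by
  induction m using Nat.strong_induction_on with
  | _ m ih =>
    match m with
    | 0 => simpa [hermiteF] using PF.const 1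
    | 1 => simpa [hermiteF] using (PF.const 2).mul PF.id
    | k + 2 =>
      have := (((PF.const 2).mul PF.id).mul (ih (k + 1) (by omega))).sub
        ((PF.const (2 * (k + 1))).mul (ih k (by omega)))
      simpa [hermiteF] using this

lemma PF.hz (m : ℤ) : PF (fun x => ((hz m x : ℝ) : ℂ)) := by
  rcases lt_or_ge m 0 with h | h
  · simpa [hz_neg h] using PF.const 0
  · obtain ⟨n, rfl⟩ := Int.eq_ofNat_of_zero_le h
    have := (PF.hermite n).mul (PF.const ((Nat.factorial n : ℂ)⁻¹))
    simpa only [hz_nat, Complex.ofReal_div, Complex.ofReal_natCast, div_eq_mul_inv,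
      Complex.ofReal_mul, Complex.ofReal_inv] using this

/-! ### Matrix-valued polynomial functions and derivatives -/

section
variable {N : ℕ}

def MP (F : ℝ → Matrix (Fin N) (Fin N) ℂ) : Prop := ∀ i j, PF (fun x => F x i j)

lemma MP.const (C : Matrix (Fin N) (Fin N) ℂ) : MP (fun _ => C) := fun _ _ => PF.const _
lemma MP.add {F G : ℝ → Matrix (Fin N) (Fin N) ℂ} (hF : MP F) (hG : MP G) :
    MP (fun x => F x + G x) := fun i j => (hF i j).add (hG i j)
lemma MP.mul {F G : ℝ → Matrix (Fin N) (Fin N) ℂ} (hF : MP F) (hG : MP G) :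
    MP (fun x => F x * G x) := fun i j => by
  simp only [Matrix.mul_apply]
  exact PF.sum _ fun l => (hF i l).mul (hG l j)
lemma MP.ct {F : ℝ → Matrix (Fin N) (Fin N) ℂ} (hF : MP F) :
    MP (fun x => (F x)ᴴ) := fun i j => (hF j i).star

def MHD (F : ℝ → Matrix (Fin N) (Fin N) ℂ) (F' : Matrix (Fin N) (Fin N) ℂ) (x : ℝ) : Prop :=
  ∀ i j, HasDerivAt (fun y => F y i j) (F' i j) x

lemma MHD.mul {F G : ℝ → Matrix (Fin N) (Fin N) ℂ} {F' G' : Matrix (Fin N) (Fin N) ℂ} {x : ℝ}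
    (hF : MHD F F' x) (hG : MHD G G' x) :
    MHD (fun y => F y * G y) (F' * G x + F x * G') x := fun i j => by
  simp only [Matrix.mul_apply, Matrix.add_apply, ← Finset.sum_add_distrib]
  exact HasDerivAt.fun_sum fun l _ => (hF i l).mul (hG l j)

lemma MHD.ct {F : ℝ → Matrix (Fin N) (Fin N) ℂ} {F' : Matrix (Fin N) (Fin N) ℂ} {x : ℝ}
    (hF : MHD F F' x) : MHD (fun y => (F y)ᴴ) (F'ᴴ) x := fun i j => (hF j i).star

lemma MHD.matDeriv {F : ℝ → Matrix (Fin N) (Fin N) ℂ} {F' : Matrix (Fin N) (Fin N) ℂ} {x : ℝ}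
    (hF : MHD F F' x) : matDeriv N F x = F' := by
  ext i j; exact (hF i j).deriv

/-! ### Degree bounds -/

def DLT (n : ℕ) (F : ℝ → Matrix (Fin N) (Fin N) ℂ) : Prop :=
  ∃ c : ℕ → Matrix (Fin N) (Fin N) ℂ,
    ∀ x : ℝ, F x = ∑ k ∈ Finset.range n, ((x : ℂ) ^ k) • c k

lemma DLT.add {n : ℕ} {F G : ℝ → Matrix (Fin N) (Fin N) ℂ} (hF : DLT n F) (hG : DLT n G) :
    DLT n (fun x => F x + G x) := by
  obtain ⟨c, hc⟩ := hF; obtain ⟨d, hd⟩ := hG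
  exact ⟨fun k => c k + d k, fun x => by simp [hc, hd, Finset.sum_add_distrib]⟩
lemma DLT.mulLeft {n : ℕ} {F : ℝ → Matrix (Fin N) (Fin N) ℂ} (hF : DLT n F)
    (C : Matrix (Fin N) (Fin N) ℂ) : DLT n (fun x => C * F x) := by
  obtain ⟨c, hc⟩ := hF
  exact ⟨fun k => C * c k, fun x => by simp [hc, Finset.mul_sum]⟩
lemma DLT.mulRight {n : ℕ} {F : ℝ → Matrix (Fin N) (Fin N) ℂ} (hF : DLT n F)
    (C : Matrix (Fin N) (Fin N) ℂ) : DLT n (fun x => F x * C) := by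
  obtain ⟨c, hc⟩ := hF
  exact ⟨fun k => c k * C, fun x => by simp [hc, Finset.sum_mul]⟩
lemma DLT.neg {n : ℕ} {F : ℝ → Matrix (Fin N) (Fin N) ℂ} (hF : DLT n F) :
    DLT n (fun x => - F x) := by
  simpa using hF.mulLeft (-1)
lemma DLT.sub {n : ℕ} {F G : ℝ → Matrix (Fin N) (Fin N) ℂ} (hF : DLT n F) (hG : DLT n G) :
    DLT n (fun x => F x - G x) := by
  simpa only [sub_eq_add_neg] using hF.add hG.neg
lemma DLT.mono {m n : ℕ} (h : m ≤ n) {F : ℝ → Matrix (Fin N) (Fin N) ℂ} (hF : DLT m F) :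
    DLT n F := by
  obtain ⟨c, hc⟩ := hF
  refine ⟨fun k => if k < m then c k else 0, fun x => ?_⟩
  rw [hc, ← Finset.sum_subset (Finset.range_mono h)]
  · refine Finset.sum_congr rfl fun k hk => ?_
    simp [Finset.mem_range.1 hk]
  · intro k _ hk
    have : ¬ k < m := by simpa using hk
    simp [this]
lemma DLT.xmul {n : ℕ} {F : ℝ → Matrix (Fin N) (Fin N) ℂ} (hF : DLT n F) :
    DLT (n + 1) (fun x => (x : ℂ) • F x) := by
  obtain ⟨c, hc⟩ := hF
  refine ⟨fun k => if k = 0 then 0 else c (k - 1), fun x => ?_⟩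
  beta_reduce
  rw [Finset.sum_range_succ', hc, Finset.smul_sum]
  simp [smul_smul, pow_succ']
lemma DLT.deriv {n : ℕ} {F : ℝ → Matrix (Fin N) (Fin N) ℂ} (hF : DLT (n + 1) F) :
    ∃ F', DLT n F' ∧ ∀ x, MHD F (F' x) x := by
  obtain ⟨c, hc⟩ := hF
  refine ⟨fun x => ∑ k ∈ Finset.range n, ((x : ℂ) ^ k) • (((k : ℂ) + 1) • c (k + 1)),
    ⟨_, fun x => rfl⟩, fun x i j => ?_⟩
  have e : (fun y => F y i j)
      = fun y : ℝ => (∑ k ∈ Finset.range n, ((y : ℂ) ^ (k + 1)) * c (k + 1) i j) + c 0 i j := by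
    funext y
    rw [hc, Finset.sum_range_succ']
    simp [Matrix.sum_apply]
  rw [e]
  refine HasDerivAt.add_const _ ?_
  simp only [Matrix.sum_apply, Matrix.smul_apply, smul_eq_mul]
  refine HasDerivAt.fun_sum fun k _ => ?_
  have h := ((Complex.ofRealCLM.hasDerivAt (x := x)).pow (k + 1)).mul_const (c (k + 1) i j)
  refine h.congr_deriv ?_
  simp
  ring
lemma DLT.mp {n : ℕ} {F : ℝ → Matrix (Fin N) (Fin N) ℂ} (hF : DLT n F) : MP F := by
  obtain ⟨c, hc⟩ := hF
  intro i j
  have : (fun x => F x i j) = fun x : ℝ => ∑ k ∈ Finset.range n, ((x : ℂ) ^ k) * c k i j := by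
    funext x; simp [hc, Matrix.sum_apply]
  rw [this]
  exact PF.sum _ fun k => (PF.pow k).mul (PF.const _)

lemma monic_split {n : ℕ} {F : ℝ → Matrix (Fin N) (Fin N) ℂ} (h : IsMonicMatPoly N n F) :
    ∃ R, DLT n R ∧ ∀ x, F x = ((x : ℂ) ^ n) • 1 + R x := by
  obtain ⟨c, h1, hc⟩ := h
  refine ⟨_, ⟨c, fun x => rfl⟩, fun x => ?_⟩
  rw [hc, Finset.sum_range_succ, h1, add_comm]

lemma monic_dlt {n : ℕ} {F : ℝ → Matrix (Fin N) (Fin N) ℂ} (h : IsMonicMatPoly N n F) :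
    DLT (n + 1) F := by
  obtain ⟨c, h1, hc⟩ := h
  exact ⟨c, hc⟩

lemma span_lemma {P : ℕ → ℝ → Matrix (Fin N) (Fin N) ℂ} (hP : ∀ n, IsMonicMatPoly N n (P n))
    (n : ℕ) : ∀ F : ℝ → Matrix (Fin N) (Fin N) ℂ, DLT n F →
      ∃ C : ℕ → Matrix (Fin N) (Fin N) ℂ, ∀ x, F x = ∑ k ∈ Finset.range n, C k * P k x := by
  induction n with
  | zero => intro F ⟨c, hc⟩; exact ⟨c, by simpa using hc⟩
  | succ n ih =>
    intro F ⟨c, hc⟩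
    obtain ⟨R, hR, hPR⟩ := monic_split (hP n)
    have h1 : DLT n (fun x => ∑ k ∈ Finset.range n, ((x : ℂ) ^ k) • c k) := ⟨c, fun _ => rfl⟩
    obtain ⟨C, hC⟩ := ih _ (h1.sub (hR.mulLeft (c n)))
    refine ⟨fun k => if k < n then C k else c n, fun x => ?_⟩
    have h2 : ∑ k ∈ Finset.range n, (if k < n then C k else c n) * P k x
        = ∑ k ∈ Finset.range n, C k * P k x :=
      Finset.sum_congr rfl fun k hk => by simp [Finset.mem_range.1 hk]
    rw [Finset.sum_range_succ, h2, ← hC x, hc, Finset.sum_range_succ]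
    simp [hPR, mul_add]

/-! ### The weight -/

noncomputable def Lz (α : Fin N → ℝ) (s : ℤ) (x : ℝ) : Matrix (Fin N) (Fin N) ℂ :=
  Matrix.of fun j k => ((hz ((j : ℕ) - (k : ℕ) - s) x * (α j / α k) : ℝ) : ℂ)

lemma Lmat_eq (α : Fin N → ℝ) (x : ℝ) : Lmat N α x = Lz α 0 x := by
  ext j k
  simp only [Lmat, Lz, Matrix.of_apply]
  split_ifs with h
  · have : ((j : ℕ) : ℤ) - ((k : ℕ) : ℤ) - 0 = (((j : ℕ) - (k : ℕ) : ℕ) : ℤ) := by omega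
    rw [this, hz_nat]
  · rw [hz_neg (by omega)]; simp

lemma sum_prev (j : Fin N) (f : Fin N → ℂ) :
    ∑ l : Fin N, (if (j : ℕ) = (l : ℕ) + 1 then f l else 0)
      = if h : 0 < (j : ℕ) then f ⟨(j : ℕ) - 1, by omega⟩ else 0 := by
  split_ifs with h
  · rw [Finset.sum_eq_single (⟨(j : ℕ) - 1, by omega⟩ : Fin N)]
    · rw [if_pos]; simp; omega
    · intro b _ hb
      rw [if_neg]
      intro h'; apply hb; ext; simp; omega
    · simp
  · refine Finset.sum_eq_zero fun l _ => if_neg (by omega)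

lemma sum_next (j : Fin N) (f : Fin N → ℂ) :
    ∑ l : Fin N, (if (l : ℕ) = (j : ℕ) + 1 then f l else 0)
      = if h : (j : ℕ) + 1 < N then f ⟨(j : ℕ) + 1, h⟩ else 0 := by
  split_ifs with h
  · rw [Finset.sum_eq_single (⟨(j : ℕ) + 1, h⟩ : Fin N)]
    · rw [if_pos]; rfl
    · intro b _ hb
      rw [if_neg]
      intro h'; apply hb; ext; simp; omega
    · simp
  · refine Finset.sum_eq_zero fun l _ => if_neg (by omega)

lemma A_mul_Lz (α : Fin N → ℝ) (hα : ∀ j, 0 < α j) (s : ℤ) (hs : 0 ≤ s) (x : ℝ) :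
    Amat N α * Lz α s x = (2 : ℂ) • Lz α (s + 1) x := by
  ext j k
  simp only [Matrix.mul_apply, Amat, Lz, Matrix.of_apply, Matrix.smul_apply, ite_mul, zero_mul]
  rw [sum_prev]
  split_ifs with h
  · have e : (((⟨(j : ℕ) - 1, by omega⟩ : Fin N) : ℕ) : ℤ) - (k : ℕ) - s
        = ((j : ℕ) : ℤ) - (k : ℕ) - (s + 1) := by simp; omega
    rw [e, smul_eq_mul, ← Complex.ofReal_ofNat, ← Complex.ofReal_mul, ← Complex.ofReal_mul]
    congr 1
    have h1 := (hα (⟨(j : ℕ) - 1, by omega⟩ : Fin N)).ne'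
    have h2 := (hα k).ne'
    field_simp
  · rw [hz_neg (by omega)]; simp

lemma Lz_mul_A (α : Fin N → ℝ) (hα : ∀ j, 0 < α j) (s : ℤ) (hs : 0 ≤ s) (x : ℝ) :
    Lz α s x * Amat N α = (2 : ℂ) • Lz α (s + 1) x := by
  ext j k
  simp only [Matrix.mul_apply, Amat, Lz, Matrix.of_apply, Matrix.smul_apply, mul_ite, mul_zero]
  rw [sum_next]
  split_ifs with h
  · have e : ((j : ℕ) : ℤ) - (((⟨(k : ℕ) + 1, h⟩ : Fin N) : ℕ) : ℤ) - s
        = ((j : ℕ) : ℤ) - (k : ℕ) - (s + 1) := by simp; omega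
    rw [e, smul_eq_mul, ← Complex.ofReal_ofNat, ← Complex.ofReal_mul, ← Complex.ofReal_mul]
    congr 1
    have h1 := (hα (⟨(k : ℕ) + 1, h⟩ : Fin N)).ne'
    have h2 := (hα k).ne'
    field_simp
  · rw [hz_neg (by omega)]; simp

lemma L_mul_Act (α : Fin N → ℝ) (hα : ∀ j, 0 < α j)
    (hspec : ∀ j k : Fin N, (j : ℕ) = (k : ℕ) + 1 →
      2 * α j / α k = Real.sqrt ((j : ℕ) * (N - (j : ℕ)))) (x : ℝ) (j k : Fin N) :
    (Lz α 0 x * (Amat N α)ᴴ) j k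
      = ((hz ((j : ℕ) - (k : ℕ) + 1) x * ((k : ℕ) * (N - (k : ℕ)) / 2) * (α j / α k) : ℝ) : ℂ) := by
  have : ∀ l : Fin N, (Lz α 0 x) j l * ((Amat N α)ᴴ) l k
      = if (k : ℕ) = (l : ℕ) + 1 then
        ((hz ((j : ℕ) - (l : ℕ) - 0) x * (α j / α l) * (2 * α k / α l) : ℝ) : ℂ) else 0 := by
    intro l
    simp only [Amat, Lz, Matrix.of_apply, Matrix.conjTranspose_apply]
    split_ifs <;> simp
  rw [Matrix.mul_apply, Finset.sum_congr rfl fun l _ => this l, sum_prev]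
  split_ifs with h
  · have e : ((j : ℕ) : ℤ) - (((⟨(k : ℕ) - 1, by omega⟩ : Fin N) : ℕ) : ℤ) - 0
        = ((j : ℕ) : ℤ) - (k : ℕ) + 1 := by simp; omega
    rw [e]
    congr 1
    set l : Fin N := ⟨(k : ℕ) - 1, by omega⟩ with hl
    have hs := hspec k l (by simp [hl]; omega)
    have hk : ((k : ℕ) : ℝ) ≤ N := by exact_mod_cast k.2.le
    have hsq : (2 * α k / α l) ^ 2 = (k : ℕ) * (N - (k : ℕ)) := by
      rw [hs, Real.sq_sqrt]; exact mul_nonneg (by positivity) (by linarith)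
    rw [← hsq]
    have h1 := (hα l).ne'
    have h2 := (hα k).ne'
    field_simp
  · have : (k : ℕ) = 0 := by omega
    simp [this]

lemma Act_mul_L (α : Fin N → ℝ) (hα : ∀ j, 0 < α j)
    (hspec : ∀ j k : Fin N, (j : ℕ) = (k : ℕ) + 1 →
      2 * α j / α k = Real.sqrt ((j : ℕ) * (N - (j : ℕ)))) (x : ℝ) (j k : Fin N) :
    ((Amat N α)ᴴ * Lz α 0 x) j k
      = ((hz ((j : ℕ) - (k : ℕ) + 1) x * (((j : ℕ) + 1) * (N - (j : ℕ) - 1) / 2)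
          * (α j / α k) : ℝ) : ℂ) := by
  have : ∀ l : Fin N, ((Amat N α)ᴴ) j l * (Lz α 0 x) l k
      = if (l : ℕ) = (j : ℕ) + 1 then
        ((hz ((l : ℕ) - (k : ℕ) - 0) x * (α l / α k) * (2 * α l / α j) : ℝ) : ℂ) else 0 := by
    intro l
    simp only [Amat, Lz, Matrix.of_apply, Matrix.conjTranspose_apply]
    split_ifs <;> simp
    ring
  rw [Matrix.mul_apply, Finset.sum_congr rfl fun l _ => this l, sum_next]
  split_ifs with h
  · have e : (((⟨(j : ℕ) + 1, h⟩ : Fin N) : ℕ) : ℤ) - ((k : ℕ) : ℤ) - 0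
        = ((j : ℕ) : ℤ) - (k : ℕ) + 1 := by simp; omega
    rw [e]
    congr 1
    set l : Fin N := ⟨(j : ℕ) + 1, h⟩ with hl
    have hs := hspec l j (by simp [hl])
    have hk : ((l : ℕ) : ℝ) ≤ N := by exact_mod_cast l.2.le
    have hsq : (2 * α l / α j) ^ 2 = (l : ℕ) * (N - (l : ℕ)) := by
      rw [hs, Real.sq_sqrt]; exact mul_nonneg (by positivity) (by linarith)
    have hl2 : ((l : ℕ) : ℝ) = (j : ℕ) + 1 := by simp [hl]
    have hsq' : (2 * α l / α j) ^ 2 = ((j : ℕ) + 1) * (N - (j : ℕ) - 1) := by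
      rw [hsq, hl2]; ring
    rw [← hsq']
    have h1 := (hα j).ne'
    have h2 := (hα k).ne'
    field_simp
  · have : (N : ℝ) = (j : ℕ) + 1 := by
      have : N = (j : ℕ) + 1 := by omega
      exact_mod_cast this
    simp [this]

noncomputable def Dm (N : ℕ) : Matrix (Fin N) (Fin N) ℂ :=
  Matrix.diagonal fun j => ((2 * (j : ℕ) + 1 - N : ℝ) : ℂ)

noncomputable def C0 (α : Fin N → ℝ) : Matrix (Fin N) (Fin N) ℂ :=
  (Amat N α)ᴴ - (1 / 2 : ℂ) • (Dm N * Amat N α) + (1 / 2 : ℂ) • Amat N α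
    - (1 / 4 : ℂ) • (Amat N α * (Amat N α * Amat N α))

noncomputable def C1 (α : Fin N → ℝ) : Matrix (Fin N) (Fin N) ℂ :=
  Dm N + Amat N α * Amat N α

lemma hz_identity (j k n : ℝ) (m : ℤ) (hm : (m : ℝ) = j - k) (x : ℝ) :
    hz (m + 1) x * (k * (n - k) / 2)
      = hz (m + 1) x * ((j + 1) * (n - j - 1) / 2) - (2 * j + 1 - n) * hz (m - 1) x
        + hz (m - 1) x - 2 * hz (m - 3) x
        + x * ((2 * j + 1 - n) * hz m x + 4 * hz (m - 2) x) - x ^ 2 * (2 * hz (m - 1) x) := by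
  have r1 := hz_rec (m + 1) x
  have r0 := hz_rec m x
  have r2 := hz_rec (m - 1) x
  have e1 : m + 1 - 1 = m := by ring
  have e2 : m + 1 - 2 = m - 1 := by ring
  have e3 : m - 1 - 1 = m - 2 := by ring
  have e4 : m - 1 - 2 = m - 3 := by ring
  rw [e1, e2] at r1
  rw [e3, e4] at r2
  push_cast at r1 r2
  have hk : k = j - m := by linarith
  subst hk
  linear_combination ((2 * j - n + 1 - m) / 2) * r1 - x * r0 + r2

lemma L_intertwine (α : Fin N → ℝ) (hα : ∀ j, 0 < α j)
    (hspec : ∀ j k : Fin N, (j : ℕ) = (k : ℕ) + 1 →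
      2 * α j / α k = Real.sqrt ((j : ℕ) * (N - (j : ℕ)))) (x : ℝ) :
    Lz α 0 x * (Amat N α)ᴴ
      = (C0 α + (x : ℂ) • C1 α - ((x : ℂ) ^ 2) • Amat N α) * Lz α 0 x := by
  have a1 := A_mul_Lz α hα 0 le_rfl x
  have a2 := A_mul_Lz α hα 1 (by norm_num) x
  have a3 := A_mul_Lz α hα 2 (by norm_num) x
  norm_num at a1 a2 a3
  ext j k
  rw [L_mul_Act α hα hspec]
  simp only [C0, C1, Matrix.add_mul, Matrix.sub_mul, Matrix.smul_mul, Matrix.mul_assoc, a1, a2, a3,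
    Matrix.mul_smul, Matrix.add_apply, Matrix.sub_apply, Matrix.smul_apply, smul_eq_mul,
    Act_mul_L α hα hspec, Dm, Matrix.diagonal_mul]
  simp only [Lz, Matrix.of_apply]
  have := hz_identity (j : ℕ) (k : ℕ) N (((j : ℕ) : ℤ) - (k : ℕ)) (by push_cast; ring) x
  rw [this, sub_zero]
  push_cast
  ring

lemma Lz_MHD (α : Fin N → ℝ) (hα : ∀ j, 0 < α j) (x : ℝ) :
    MHD (fun y => Lz α 0 y) (Amat N α * Lz α 0 x) x := by
  rw [A_mul_Lz α hα 0 le_rfl x]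
  intro j k
  simp only [Lz, Matrix.of_apply, Matrix.smul_apply]
  have h := ((hz_hasDerivAt (((j : ℕ) : ℤ) - (k : ℕ) - 0) x).mul_const (α j / α k)).ofReal_comp
  refine h.congr_deriv ?_
  simp
  ring

lemma Lz_MP (α : Fin N → ℝ) : MP (fun y => Lz α 0 y) := fun j k => by
  simp only [Lz, Matrix.of_apply, Complex.ofReal_mul]
  exact (PF.hz _).mul (PF.const _)

noncomputable def Psi (α : Fin N → ℝ) (x : ℝ) : Matrix (Fin N) (Fin N) ℂ :=
  (C0 α + (x : ℂ) • C1 α - ((x : ℂ) ^ 2) • Amat N α) + Amat N α - (2 * (x : ℂ)) • 1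

lemma hermW_MHD (α : Fin N → ℝ) (hα : ∀ j, 0 < α j)
    (hspec : ∀ j k : Fin N, (j : ℕ) = (k : ℕ) + 1 →
      2 * α j / α k = Real.sqrt ((j : ℕ) * (N - (j : ℕ)))) (x : ℝ) :
    MHD (hermW N α) (hermW N α x * (Psi α x)ᴴ) x := by
  have hL := Lz_MHD α hα x
  have hLL := hL.mul hL.ct
  have key : Amat N α * Lz α 0 x * (Lz α 0 x)ᴴ + Lz α 0 x * (Amat N α * Lz α 0 x)ᴴ
      - (2 * (x : ℂ)) • (Lz α 0 x * (Lz α 0 x)ᴴ)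
      = Lz α 0 x * (Lz α 0 x)ᴴ * (Psi α x)ᴴ := by
    have hc : Amat N α * Lz α 0 x = Lz α 0 x * Amat N α := by
      rw [A_mul_Lz α hα 0 le_rfl, Lz_mul_A α hα 0 le_rfl]
    have h1 := congrArg Matrix.conjTranspose (L_intertwine α hα hspec x)
    rw [Matrix.conjTranspose_mul, Matrix.conjTranspose_mul, Matrix.conjTranspose_conjTranspose] at h1
    rw [hc, Matrix.mul_assoc, h1, Matrix.conjTranspose_mul, Psi]
    generalize C0 α + (x : ℂ) • C1 α - ((x : ℂ) ^ 2) • Amat N α = S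
    rw [Matrix.conjTranspose_sub, Matrix.conjTranspose_add, Matrix.mul_sub, Matrix.mul_add]
    simp [Matrix.conjTranspose_smul, Matrix.mul_assoc]
    rw [← Matrix.conjTranspose_mul, ← Matrix.conjTranspose_mul, hc]
  intro i j
  have he : HasDerivAt (fun y : ℝ => ((Real.exp (-y ^ 2) : ℝ) : ℂ))
      ((Real.exp (-x ^ 2) * (-(2 * x)) : ℝ) : ℂ) x := by
    apply HasDerivAt.ofReal_comp
    have h := ((hasDerivAt_pow 2 x).neg).exp
    simpa using h
  have h := he.mul (hLL i j)
  have e : (fun y => hermW N α y i j)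
      = fun y => ((Real.exp (-y ^ 2) : ℝ) : ℂ) * (Lz α 0 y * (Lz α 0 y)ᴴ) i j := by
    funext y; simp [hermW, Lmat_eq]
  rw [e]
  refine h.congr_deriv ?_
  have : hermW N α x * (Psi α x)ᴴ
      = ((Real.exp (-x ^ 2) : ℝ) : ℂ) • (Lz α 0 x * (Lz α 0 x)ᴴ * (Psi α x)ᴴ) := by
    rw [hermW, Lmat_eq, Matrix.smul_mul]
    rfl
  rw [this, ← key]
  simp only [Matrix.smul_apply, Matrix.add_apply, Matrix.sub_apply, smul_eq_mul]
  push_cast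
  ring

lemma ip_integrable (α : Fin N → ℝ) {F G : ℝ → Matrix (Fin N) (Fin N) ℂ} (hF : MP F) (hG : MP G)
    (i j : Fin N) : Integrable (fun y : ℝ => (F y * hermW N α y * (G y)ᴴ) i j) := by
  have h := ((hF.mul ((Lz_MP α).mul (Lz_MP α).ct)).mul hG.ct) i j
  refine h.integrable.congr (Filter.Eventually.of_forall fun x => ?_)
  simp only [hermW, Lmat_eq, Matrix.mul_smul, Matrix.smul_mul, Matrix.smul_apply]
  simp

lemma ip_add_left (α : Fin N → ℝ) {F F' G : ℝ → Matrix (Fin N) (Fin N) ℂ} (hF : MP F) (hF' : MP F')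
    (hG : MP G) : matIP N (hermW N α) (fun x => F x + F' x) G
      = matIP N (hermW N α) F G + matIP N (hermW N α) F' G := by
  ext i j
  simp only [matIP, matInt, Matrix.of_apply, Matrix.add_apply, Matrix.add_mul]
  exact integral_add (ip_integrable α hF hG i j) (ip_integrable α hF' hG i j)

lemma ip_add_right (α : Fin N → ℝ) {F G G' : ℝ → Matrix (Fin N) (Fin N) ℂ} (hF : MP F)
    (hG : MP G) (hG' : MP G') : matIP N (hermW N α) F (fun x => G x + G' x)
      = matIP N (hermW N α) F G + matIP N (hermW N α) F G' := by
  ext i j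
  simp only [matIP, matInt, Matrix.of_apply, Matrix.add_apply, Matrix.conjTranspose_add,
    Matrix.mul_add]
  exact integral_add (ip_integrable α hF hG i j) (ip_integrable α hF hG' i j)

lemma ip_mul_left (α : Fin N → ℝ) (C : Matrix (Fin N) (Fin N) ℂ)
    {F G : ℝ → Matrix (Fin N) (Fin N) ℂ} (hF : MP F) (hG : MP G) :
    matIP N (hermW N α) (fun x => C * F x) G = C * matIP N (hermW N α) F G := by
  ext i j
  simp only [matIP, matInt, Matrix.of_apply, Matrix.mul_assoc]
  rw [Matrix.mul_apply]
  simp only [Matrix.mul_apply (M := C), Matrix.of_apply]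
  rw [integral_finsetSum]
  · exact Finset.sum_congr rfl fun l _ => integral_const_mul _ _
  · intro l _
    have := (ip_integrable α hF hG l j).const_mul (C i l)
    simpa only [Matrix.mul_assoc] using this

lemma ip_mul_right (α : Fin N → ℝ) (C : Matrix (Fin N) (Fin N) ℂ)
    {F G : ℝ → Matrix (Fin N) (Fin N) ℂ} (hF : MP F) (hG : MP G) :
    matIP N (hermW N α) F (fun x => C * G x) = matIP N (hermW N α) F G * Cᴴ := by
  ext i j
  simp only [matIP, matInt, Matrix.of_apply, Matrix.conjTranspose_mul, ← Matrix.mul_assoc]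
  rw [Matrix.mul_apply]
  simp only [Matrix.mul_apply (N := Cᴴ), Matrix.of_apply]
  rw [integral_finsetSum]
  · exact Finset.sum_congr rfl fun l _ => integral_mul_const _ _
  · intro l _
    exact (ip_integrable α hF hG i l).mul_const (Cᴴ l j)

lemma ip_sum_left (α : Fin N → ℝ) (P : ℕ → ℝ → Matrix (Fin N) (Fin N) ℂ) (hP : ∀ k, MP (P k))
    {G : ℝ → Matrix (Fin N) (Fin N) ℂ} (hG : MP G) (C : ℕ → Matrix (Fin N) (Fin N) ℂ) (n : ℕ) :
    MP (fun x => ∑ k ∈ Finset.range n, C k * P k x) ∧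
    matIP N (hermW N α) (fun x => ∑ k ∈ Finset.range n, C k * P k x) G
      = ∑ k ∈ Finset.range n, C k * matIP N (hermW N α) (P k) G := by
  induction n with
  | zero => exact ⟨by simpa using MP.const 0, by ext i j; simp [matIP, matInt]⟩
  | succ n ih =>
    have h := (MP.const (C n)).mul (hP n)
    simp only [Finset.sum_range_succ]
    exact ⟨ih.1.add h, by rw [ip_add_left α ih.1 h hG, ih.2, ip_mul_left α _ (hP n) hG]⟩

lemma ip_sum_right (α : Fin N → ℝ) (P : ℕ → ℝ → Matrix (Fin N) (Fin N) ℂ) (hP : ∀ k, MP (P k))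
    {F : ℝ → Matrix (Fin N) (Fin N) ℂ} (hF : MP F) (C : ℕ → Matrix (Fin N) (Fin N) ℂ) (n : ℕ) :
    matIP N (hermW N α) F (fun x => ∑ k ∈ Finset.range n, C k * P k x)
      = ∑ k ∈ Finset.range n, matIP N (hermW N α) F (P k) * (C k)ᴴ := by
  induction n with
  | zero => ext i j; simp [matIP, matInt]
  | succ n ih =>
    have h := (MP.const (C n)).mul (hP n)
    simp only [Finset.sum_range_succ]
    rw [ip_add_right α hF (ip_sum_left α P hP hF C n).1 h, ih, ip_mul_right α _ hF (hP n)]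

lemma Psi_MP (α : Fin N → ℝ) : MP (Psi α) := fun i j => by
  have h := (((((PF.const (C0 α i j)).add (PF.id.mul (PF.const (C1 α i j)))).sub
    ((PF.pow 2).mul (PF.const (Amat N α i j)))).add (PF.const (Amat N α i j))).sub
    (((PF.const 2).mul PF.id).mul (PF.const ((1 : Matrix (Fin N) (Fin N) ℂ) i j))))
  simpa [Psi] using h

lemma ibp (α : Fin N → ℝ) (hα : ∀ j, 0 < α j)
    (hspec : ∀ j k : Fin N, (j : ℕ) = (k : ℕ) + 1 →
      2 * α j / α k = Real.sqrt ((j : ℕ) * (N - (j : ℕ))))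
    {F F' G G' : ℝ → Matrix (Fin N) (Fin N) ℂ} (hF : MP F) (hF' : MP F') (hG : MP G) (hG' : MP G')
    (hFd : ∀ x, MHD F (F' x) x) (hGd : ∀ x, MHD G (G' x) x) :
    matIP N (hermW N α) F' G + matIP N (hermW N α) F (fun x => G x * Psi α x + G' x) = 0 := by
  have hGP : MP (fun x => G x * Psi α x) := hG.mul (Psi_MP α)
  have hS := hGP.add hG'
  ext i j
  simp only [matIP, matInt, Matrix.of_apply, Matrix.add_apply, Matrix.zero_apply]
  have i1 := ip_integrable α hF' hG i j
  have i2 := ip_integrable α hF hS i j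
  rw [← integral_add i1 i2]
  refine integral_eq_zero_of_hasDerivAt_of_integrable
    (f := fun y => (F y * hermW N α y * (G y)ᴴ) i j) (fun x => ?_) (i1.add i2)
    (ip_integrable α hF hG i j)
  have h := (((hFd x).mul (hermW_MHD α hα hspec x)).mul (hGd x).ct) i j
  refine h.congr_deriv ?_
  rw [← Matrix.add_apply]
  refine congrFun (congrFun ?_ i) j
  simp only [Matrix.conjTranspose_add, Matrix.conjTranspose_mul]
  noncomm_ring

end

theorem hermite_pearson_lowering
    (N : ℕ) (hN : 1 ≤ N) (α : Fin N → ℝ) (hα : ∀ j, 0 < α j)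
    (P : ℕ → ℝ → Matrix (Fin N) (Fin N) ℂ)
    (hPmonic : ∀ n, IsMonicMatPoly N n (P n))
    (hPorth : ∀ n m, n ≠ m → matIP N (hermW N α) (P n) (P m) = 0)
    (hHpos : ∀ n, (matIP N (hermW N α) (P n) (P n)).PosDef)
    (hspec : ∀ j k : Fin N, (j : ℕ) = (k : ℕ) + 1 →
      2 * α j / α k = Real.sqrt ((j : ℕ) * (N - (j : ℕ))))
    :
    ∀ n : ℕ, 2 ≤ n → ∀ x : ℝ,
      matDeriv N (P n) x =
        (n : ℂ) • P (n - 1) x +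
          matIP N (hermW N α) (P n) (P n) * (Amat N α)ᴴ *
            (matIP N (hermW N α) (P (n - 2)) (P (n - 2)))⁻¹ * P (n - 2) x := by
  intro n hn x
  obtain ⟨n, rfl⟩ : ∃ m, n = m + 2 := ⟨n - 2, by omega⟩
  have hPd : ∀ k, DLT (k + 1) (P k) := fun k => monic_dlt (hPmonic k)
  have hPm : ∀ k, MP (P k) := fun k => (hPd k).mp
  choose P' hP'd hP' using fun k => (hPd k).deriv
  have hP'm : ∀ k, MP (P' k) := fun k => (hP'd k).mp
  rw [(hP' (n + 2) x).matDeriv]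
  have e1 : n + 2 - 1 = n + 1 := rfl
  have e2 : n + 2 - 2 = n := rfl
  rw [e1, e2]
  -- orthogonality to lower degree
  have orth : ∀ R, DLT (n + 2) R → matIP N (hermW N α) (P (n + 2)) R = 0 := by
    intro R hR
    obtain ⟨C, hC⟩ := span_lemma hPmonic _ R hR
    rw [funext hC, ip_sum_right α P hPm (hPm _)]
    refine Finset.sum_eq_zero fun k hk => ?_
    rw [hPorth _ _ (by have := Finset.mem_range.1 hk; omega), Matrix.zero_mul]
  -- degree of the Pearson image
  have hPsi : ∀ k, DLT (k + 2) (fun y => P k y * Psi α y + P' k y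
      + Amat N α * (((y : ℂ) ^ (k + 2)) • (1 : Matrix (Fin N) (Fin N) ℂ))) := by
    intro k
    obtain ⟨R, hR, hPR⟩ := monic_split (hPmonic k)
    have h1 : DLT (k + 2) (fun y => P k y * (C0 α + Amat N α)) :=
      ((hPd k).mulRight _).mono (by omega)
    have h2 : DLT (k + 2) (fun y => (y : ℂ) • (P k y * (C1 α - (2 : ℂ) • 1))) :=
      ((hPd k).mulRight _).xmul
    have h3 : DLT (k + 2) (fun y => (y : ℂ) • ((y : ℂ) • (R y * Amat N α))) :=
      ((hR.mulRight _).xmul).xmul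
    have h4 : DLT (k + 2) (P' k) := (hP'd k).mono (by omega)
    have h := ((h1.add h2).sub h3).add h4
    convert h using 1
    funext y
    have : Psi α y = (C0 α + Amat N α) + (y : ℂ) • (C1 α - (2 : ℂ) • 1)
        - ((y : ℂ) ^ 2) • Amat N α := by
      simp only [Psi, smul_sub, smul_smul]
      rw [mul_comm (2 : ℂ)]
      abel
    rw [this, Matrix.mul_sub, Matrix.mul_add]
    have h5 : P k y * (((y : ℂ) ^ 2) • Amat N α)
        = ((y : ℂ) ^ (k + 2)) • Amat N α + (y : ℂ) • ((y : ℂ) • (R y * Amat N α)) := by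
      rw [hPR, Matrix.add_mul, Matrix.smul_mul, Matrix.one_mul, Matrix.mul_smul, smul_smul,
        smul_smul, ← pow_add, pow_two]
    rw [h5]
    simp only [Matrix.mul_smul, Matrix.mul_one]
    abel
  have ip0 : ∀ k, k < n → matIP N (hermW N α) (P' (n + 2)) (P k) = 0 := by
    intro k hk
    have h := ibp α hα hspec (hPm (n + 2)) (hP'm (n + 2)) (hPm k) (hP'm k) (hP' _) (hP' _)
    have hm : DLT (k + 3) (fun y : ℝ => Amat N α
        * (((y : ℂ) ^ (k + 2)) • (1 : Matrix (Fin N) (Fin N) ℂ))) := by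
      obtain ⟨R, hR, hPR⟩ := monic_split (hPmonic (k + 2))
      have := ((hPd (k + 2)).sub (hR.mono (Nat.le_succ _))).mulLeft (Amat N α)
      simpa [hPR] using this
    have hd := (((hPsi k).mono (Nat.le_succ _)).sub hm).mono (show k + 3 ≤ n + 2 by omega)
    simp only [add_sub_cancel_right] at hd
    rw [orth _ hd, add_zero] at h
    exact h
  have ipn : matIP N (hermW N α) (P' (n + 2)) (P n)
      = matIP N (hermW N α) (P (n + 2)) (P (n + 2)) * (Amat N α)ᴴ := by
    have h := ibp α hα hspec (hPm (n + 2)) (hP'm (n + 2)) (hPm n) (hP'm n) (hP' _) (hP' _)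
    obtain ⟨R, hR, hPR⟩ := monic_split (hPmonic (n + 2))
    have hd := (hPsi n).add (hR.mulLeft (Amat N α))
    have e : (fun y => P n y * Psi α y + P' n y)
        = fun y => ((P n y * Psi α y + P' n y
          + Amat N α * (((y : ℂ) ^ (n + 2)) • (1 : Matrix (Fin N) (Fin N) ℂ)))
          + Amat N α * R y) + (-Amat N α) * P (n + 2) y := by
      funext y
      rw [hPR y, Matrix.neg_mul, Matrix.mul_add]
      abel
    rw [e, ip_add_right α (hPm _) hd.mp ((MP.const _).mul (hPm _)), orth _ hd,
      ip_mul_right α _ (hPm _) (hPm _), zero_add, Matrix.conjTranspose_neg, Matrix.mul_neg] at h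
    exact add_neg_eq_zero.1 h
  set M := matIP N (hermW N α) (P (n + 2)) (P (n + 2)) * (Amat N α)ᴴ *
    (matIP N (hermW N α) (P n) (P n))⁻¹ with hM
  -- degree drop
  have hlow : DLT (n + 1) (fun y => P' (n + 2) y - ((n + 2 : ℕ) : ℂ) • P (n + 1) y) := by
    obtain ⟨R, hR, hPR⟩ := monic_split (hPmonic (n + 2))
    obtain ⟨S, hS, hPS⟩ := monic_split (hPmonic (n + 1))
    obtain ⟨R', hR'd, hR'⟩ := hR.deriv
    have hd := hR'd.sub (hS.mulLeft (((n + 2 : ℕ) : ℂ) • 1))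
    convert hd using 1
    funext y
    have : P' (n + 2) y = (((n + 2 : ℕ) : ℂ) * (y : ℂ) ^ (n + 1)) • 1 + R' y := by
      ext i j
      refine (hP' (n + 2) y i j).unique ?_
      have h := (((Complex.ofRealCLM.hasDerivAt (x := y)).pow (n + 2)).mul_const
        ((1 : Matrix (Fin N) (Fin N) ℂ) i j)).add (hR' y i j)
      have e : (fun z => P (n + 2) z i j)
          = fun z : ℝ => (z : ℂ) ^ (n + 2) * (1 : Matrix (Fin N) (Fin N) ℂ) i j + R z i j := by
        funext z; rw [hPR]; simp
      rw [e]
      refine h.congr_deriv ?_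
      simp
    rw [this, hPS]
    simp only [smul_add, smul_smul, Matrix.smul_mul, Matrix.one_mul]
    abel
  have hQ : DLT (n + 1) (fun y => (P' (n + 2) y - ((n + 2 : ℕ) : ℂ) • P (n + 1) y)
      - M * P n y) := hlow.sub ((hPd n).mulLeft M)
  obtain ⟨C, hC⟩ := span_lemma hPmonic _ _ hQ
  have hzero : ∀ k ∈ Finset.range (n + 1), C k = 0 := by
    intro k hk
    have hk' := Finset.mem_range.1 hk
    have hinv : IsUnit (matIP N (hermW N α) (P k) (P k)).det :=
      (Matrix.isUnit_iff_isUnit_det _).1 (hHpos k).isUnit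
    have h1 := (ip_sum_left α P hPm (hPm k) C (n + 1)).2
    rw [Finset.sum_eq_single k (fun b _ hb => by rw [hPorth b k hb, Matrix.mul_zero])
      (fun h => absurd hk h), ← funext hC] at h1
    have e : (fun y => (P' (n + 2) y - ((n + 2 : ℕ) : ℂ) • P (n + 1) y) - M * P n y)
        = fun y => (P' (n + 2) y + (-(((n + 2 : ℕ) : ℂ) • (1 : Matrix (Fin N) (Fin N) ℂ)))
          * P (n + 1) y) + (-M) * P n y := by
      funext y
      simp [sub_eq_add_neg, Matrix.neg_mul]
    rw [e, ip_add_left α ((hP'm _).add ((MP.const _).mul (hPm _))) ((MP.const _).mul (hPm _)) (hPm k),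
      ip_add_left α (hP'm _) ((MP.const _).mul (hPm _)) (hPm k), ip_mul_left α _ (hPm _) (hPm k),
      ip_mul_left α _ (hPm _) (hPm k), hPorth (n + 1) k (by omega), Matrix.mul_zero, add_zero] at h1
    have h2 : C k * matIP N (hermW N α) (P k) (P k) = 0 := by
      rw [← h1]
      rcases Nat.lt_or_ge k n with h | h
      · rw [ip0 k h, hPorth n k (by omega)]; simp
      · obtain rfl : k = n := by omega
        rw [ipn, Matrix.neg_mul, hM, Matrix.nonsing_inv_mul_cancel_right _ _ hinv]
        simp
    have h3 := Matrix.mul_nonsing_inv_cancel_right (matIP N (hermW N α) (P k) (P k)) (C k) hinv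
    rw [← h3, h2, Matrix.zero_mul]
  have hfin := hC x
  rw [Finset.sum_eq_zero fun k hk => by rw [hzero k hk, Matrix.zero_mul]] at hfin
  rw [sub_sub, sub_eq_zero] at hfin
  exact hfin
end

section
/- With the special parameter choice 2α_j/α_{j−1} = √((j−1)(N−j+1)) for j = 2,…,N, the squared norms ℋ(n) of the monic MVOPs of the weight W(x) = e^{−x²}L(x)L(x)* satisfy, for every n ≥ 0, the second order recursion 2(n+1)ℋ(n+1)⁻¹ − 2(n+2)ℋ(n+2)⁻¹ℋ(n+1)ℋ(n)⁻¹ + ℋ(n+2)⁻¹Aℋ(n+2)A*ℋ(n)⁻¹ − A*ℋ(n)⁻¹A = 0. -/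
open MeasureTheory Matrix Finset
open scoped ComplexOrder

namespace HermAux

open Polynomial

/-- Coefficientwise complex conjugation on `ℂ[X]`. -/
noncomputable local instance instStarPoly : StarRing ℂ[X] where
  star p := p.map (starRingEnd ℂ)
  star_involutive p := by
    ext n
    simp [Polynomial.coeff_map]
  star_mul p q := by
    simp [Polynomial.map_mul, mul_comm]
  star_add p q := by
    simp [Polynomial.map_add]

theorem star_def (p : ℂ[X]) : star p = p.map (starRingEnd ℂ) := rfl

theorem eval_star (p : ℂ[X]) (x : ℝ) : (star p).eval (x : ℂ) = star (p.eval (x : ℂ)) := by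
  rw [star_def, Polynomial.eval_map]
  have h := Polynomial.hom_eval₂ p (RingHom.id ℂ) (starRingEnd ℂ) (x : ℂ)
  rw [RingHom.comp_id, Complex.conj_ofReal] at h
  rw [← h]
  rfl

theorem coeff_star (p : ℂ[X]) (n : ℕ) : (star p).coeff n = star (p.coeff n) := by
  rw [star_def, Polynomial.coeff_map]; rfl

/-! ### The Gaussian functional -/

theorem integrable_pow (k : ℕ) :
    Integrable (fun x : ℝ => x ^ k * Real.exp (-x ^ 2)) := by
  have h := integrable_rpow_mul_exp_neg_mul_sq (b := 1) one_pos (s := (k : ℝ))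
    (by have : (0 : ℝ) ≤ k := Nat.cast_nonneg k
        linarith)
  refine h.congr (Filter.Eventually.of_forall fun x => ?_)
  simp

theorem integrable_poly (p : ℂ[X]) :
    Integrable (fun x : ℝ => (Real.exp (-x ^ 2) : ℂ) * p.eval (x : ℂ)) := by
  induction p using Polynomial.induction_on' with
  | add p q hp hq =>
    refine (hp.add hq).congr (Filter.Eventually.of_forall fun x => ?_)
    simp [mul_add]
  | monomial n a =>
    refine ((integrable_pow n).ofReal.const_mul a).congr (Filter.Eventually.of_forall fun x => ?_)
    simp
    ring

/-- Gaussian functional. -/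
noncomputable def gl (p : ℂ[X]) : ℂ := ∫ x : ℝ, (Real.exp (-x ^ 2) : ℂ) * p.eval (x : ℂ)

theorem gl_add (p q : ℂ[X]) : gl (p + q) = gl p + gl q := by
  unfold gl
  rw [← integral_add (integrable_poly p) (integrable_poly q)]
  congr 1; ext x; simp [mul_add]

theorem gl_C_mul (a : ℂ) (p : ℂ[X]) : gl (C a * p) = a * gl p := by
  unfold gl
  rw [← integral_const_mul]
  congr 1; ext x; simp; ring

theorem gl_zero : gl 0 = 0 := by simp [gl]

theorem gl_star (p : ℂ[X]) : gl (star p) = star (gl p) := by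
  unfold gl
  change _ = (starRingEnd ℂ) _
  rw [← integral_conj]
  congr 1; ext x
  rw [eval_star, map_mul, Complex.conj_ofReal]; rfl

theorem gl_deriv (p : ℂ[X]) : gl (derivative p) = gl (2 * X * p) := by
  have hd : ∀ x : ℝ, HasDerivAt (fun x : ℝ => (Real.exp (-x ^ 2) : ℂ) * p.eval (x : ℂ))
      ((Real.exp (-x ^ 2) : ℂ) * (derivative p).eval (x : ℂ) -
        (Real.exp (-x ^ 2) : ℂ) * (2 * X * p).eval (x : ℂ)) x := by
    intro x
    have h1 : HasDerivAt (fun x : ℝ => Real.exp (-x ^ 2)) (Real.exp (-x ^ 2) * (-(2 * x))) x := by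
      have := ((hasDerivAt_pow 2 x).neg).exp
      simpa using this
    have h2 := h1.ofReal_comp.mul ((p.hasDerivAt (x : ℂ)).comp_ofReal)
    refine h2.congr_deriv ?_
    simp
    ring
  have h := integral_eq_zero_of_hasDerivAt_of_integrable hd
    ((integrable_poly _).sub (integrable_poly _)) (integrable_poly p)
  rw [integral_sub (integrable_poly _) (integrable_poly _)] at h
  exact sub_eq_zero.mp h

/-! ### Matrices of polynomials -/

variable {N : ℕ}

/-- Constant matrix polynomials. -/
noncomputable def cst : Matrix (Fin N) (Fin N) ℂ →+* Matrix (Fin N) (Fin N) ℂ[X] :=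
  (C : ℂ →+* ℂ[X]).mapMatrix

theorem cst_apply (a : Matrix (Fin N) (Fin N) ℂ) (i j : Fin N) : cst a i j = C (a i j) := rfl

theorem cst_star (a : Matrix (Fin N) (Fin N) ℂ) : (cst a)ᴴ = cst aᴴ := by
  ext1 i j
  simp [cst_apply, Matrix.conjTranspose_apply, star_def]

/-- Evaluation at a real point. -/
noncomputable def ev (x : ℝ) : Matrix (Fin N) (Fin N) ℂ[X] →+* Matrix (Fin N) (Fin N) ℂ :=
  (Polynomial.evalRingHom (x : ℂ)).mapMatrix

theorem ev_apply (x : ℝ) (F : Matrix (Fin N) (Fin N) ℂ[X]) (i j : Fin N) :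
    ev x F i j = (F i j).eval (x : ℂ) := rfl

theorem ev_star (x : ℝ) (F : Matrix (Fin N) (Fin N) ℂ[X]) : ev x Fᴴ = (ev x F)ᴴ := by
  ext1 i j
  simp [ev_apply, Matrix.conjTranspose_apply, eval_star]

/-- Coefficient. -/
noncomputable def cf (n : ℕ) (F : Matrix (Fin N) (Fin N) ℂ[X]) : Matrix (Fin N) (Fin N) ℂ :=
  Matrix.of fun i j => (F i j).coeff n

theorem cf_apply (n : ℕ) (F : Matrix (Fin N) (Fin N) ℂ[X]) (i j : Fin N) :
    cf n F i j = (F i j).coeff n := rfl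

theorem cf_add (n : ℕ) (F G : Matrix (Fin N) (Fin N) ℂ[X]) : cf n (F + G) = cf n F + cf n G := by
  ext1 i j; simp [cf_apply]

theorem cf_sub (n : ℕ) (F G : Matrix (Fin N) (Fin N) ℂ[X]) : cf n (F - G) = cf n F - cf n G := by
  ext1 i j; simp [cf_apply]

theorem cf_cst_mul (n : ℕ) (a : Matrix (Fin N) (Fin N) ℂ) (G : Matrix (Fin N) (Fin N) ℂ[X]) :
    cf n (cst a * G) = a * cf n G := by
  ext1 i j; simp [cf_apply, Matrix.mul_apply, cst_apply]

theorem cf_mul_cst (n : ℕ) (a : Matrix (Fin N) (Fin N) ℂ) (G : Matrix (Fin N) (Fin N) ℂ[X]) :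
    cf n (G * cst a) = cf n G * a := by
  ext1 i j; simp [cf_apply, Matrix.mul_apply, cst_apply]

theorem cf_X_succ (n : ℕ) (G : Matrix (Fin N) (Fin N) ℂ[X]) :
    cf (n + 1) ((X : ℂ[X]) • G) = cf n G := by
  ext1 i j; simp [cf_apply]

/-- Entrywise derivative. -/
noncomputable def dd (F : Matrix (Fin N) (Fin N) ℂ[X]) : Matrix (Fin N) (Fin N) ℂ[X] :=
  Matrix.of fun i j => derivative (F i j)

theorem dd_apply (F : Matrix (Fin N) (Fin N) ℂ[X]) (i j : Fin N) :
    dd F i j = derivative (F i j) := rfl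

theorem dd_mul (F G : Matrix (Fin N) (Fin N) ℂ[X]) : dd (F * G) = dd F * G + F * dd G := by
  ext1 i j
  simp [dd_apply, Matrix.mul_apply, Finset.sum_add_distrib]

theorem dd_star (F : Matrix (Fin N) (Fin N) ℂ[X]) : dd Fᴴ = (dd F)ᴴ := by
  ext1 i j
  simp [dd_apply, Matrix.conjTranspose_apply, star_def, Polynomial.derivative_map]

theorem cf_dd (n : ℕ) (F : Matrix (Fin N) (Fin N) ℂ[X]) :
    cf n (dd F) = ((n : ℂ) + 1) • cf (n + 1) F := by
  ext1 i j
  simp [dd_apply, cf_apply, Polynomial.coeff_derivative, mul_comm]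

/-- Matrix Gaussian functional. -/
noncomputable def gL (F : Matrix (Fin N) (Fin N) ℂ[X]) : Matrix (Fin N) (Fin N) ℂ :=
  Matrix.of fun i j => gl (F i j)

theorem gL_apply (F : Matrix (Fin N) (Fin N) ℂ[X]) (i j : Fin N) : gL F i j = gl (F i j) := rfl

theorem gL_add (F G : Matrix (Fin N) (Fin N) ℂ[X]) : gL (F + G) = gL F + gL G := by
  ext1 i j; simp [gL_apply, gl_add]

theorem gl_sum {ι : Type*} (s : Finset ι) (f : ι → ℂ[X]) :
    gl (∑ i ∈ s, f i) = ∑ i ∈ s, gl (f i) := by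
  classical
  induction s using Finset.induction_on with
  | empty => simp [gl_zero]
  | insert a s ha ih => rw [Finset.sum_insert ha, Finset.sum_insert ha, gl_add, ih]

theorem gL_cst_mul (a : Matrix (Fin N) (Fin N) ℂ) (F : Matrix (Fin N) (Fin N) ℂ[X]) :
    gL (cst a * F) = a * gL F := by
  ext1 i j
  simp [gL_apply, Matrix.mul_apply, cst_apply, gl_sum, gl_C_mul]

theorem gL_star (F : Matrix (Fin N) (Fin N) ℂ[X]) : gL Fᴴ = (gL F)ᴴ := by
  ext1 i j
  simp [gL_apply, Matrix.conjTranspose_apply, gl_star]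

theorem gL_dd (F : Matrix (Fin N) (Fin N) ℂ[X]) : gL (dd F) = gL ((2 * X : ℂ[X]) • F) := by
  ext1 i j
  simp [gL_apply, dd_apply, gl_deriv]

theorem matInt_ev (F : Matrix (Fin N) (Fin N) ℂ[X]) :
    matInt N (fun y => Real.exp (-y ^ 2) • ev y F) = gL F := by
  ext1 i j
  simp [matInt, gL_apply, gl, ev_apply]

/-! ### Inner product -/

/-- Inner product attached to the weight with factor `L`. -/
noncomputable def ip (L F G : Matrix (Fin N) (Fin N) ℂ[X]) : Matrix (Fin N) (Fin N) ℂ :=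
  gL (F * (L * Lᴴ) * Gᴴ)

theorem ip_add_left (L F G H : Matrix (Fin N) (Fin N) ℂ[X]) :
    ip L (F + G) H = ip L F H + ip L G H := by
  simp only [ip, ← gL_add, add_mul]

theorem ip_cst_left (L F G : Matrix (Fin N) (Fin N) ℂ[X]) (a : Matrix (Fin N) (Fin N) ℂ) :
    ip L (cst a * F) G = a * ip L F G := by
  simp only [ip, ← gL_cst_mul, mul_assoc]

theorem ip_star (L F G : Matrix (Fin N) (Fin N) ℂ[X]) : (ip L F G)ᴴ = ip L G F := by
  rw [ip, ip, ← gL_star]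
  simp only [Matrix.conjTranspose_mul, Matrix.conjTranspose_conjTranspose, mul_assoc]

theorem ip_sub_left (L F G H : Matrix (Fin N) (Fin N) ℂ[X]) :
    ip L (F - G) H = ip L F H - ip L G H := by
  rw [eq_sub_iff_add_eq, ← ip_add_left, sub_add_cancel]

theorem ip_zero_left (L F : Matrix (Fin N) (Fin N) ℂ[X]) : ip L 0 F = 0 := by
  have := ip_sub_left L 0 0 F
  simpa using this

/-- Degree `< n`. -/
def DL (n : ℕ) (F : Matrix (Fin N) (Fin N) ℂ[X]) : Prop := ∀ m, n ≤ m → cf m F = 0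

theorem DL_zero {F : Matrix (Fin N) (Fin N) ℂ[X]} (h : DL 0 F) : F = 0 := by
  ext i j m
  have := congrFun (congrFun (h m (Nat.zero_le _)) i) j
  simpa [cf_apply] using this

section orth
variable (L : Matrix (Fin N) (Fin N) ℂ[X]) (p : ℕ → Matrix (Fin N) (Fin N) ℂ[X])
  (hm : ∀ n, cf n (p n) = 1) (hd : ∀ n, DL (n + 1) (p n))
  (ho : ∀ n m, n ≠ m → ip L (p n) (p m) = 0)

include hm hd in
theorem DL_sub (n : ℕ) {F : Matrix (Fin N) (Fin N) ℂ[X]} (hF : DL (n + 1) F) :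
    DL n (F - cst (cf n F) * p n) := by
  intro m hmn
  rw [cf_sub, cf_cst_mul]
  rcases Nat.eq_or_lt_of_le hmn with rfl | h
  · simp [hm]
  · simp [hF m h, hd n m h]

include hm hd ho in
theorem orth_low (n k : ℕ) (hk : k ≤ n) (F : Matrix (Fin N) (Fin N) ℂ[X]) (hF : DL k F) :
    ip L F (p n) = 0 := by
  induction k generalizing F with
  | zero => rw [DL_zero hF, ip_zero_left]
  | succ k ih =>
    have h := ih (by omega) _ (DL_sub p hm hd k hF)
    rw [ip_sub_left, ip_cst_left, ho k n (by omega)] at h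
    simpa using h

include hm hd ho in
theorem orth_top (n : ℕ) (F : Matrix (Fin N) (Fin N) ℂ[X]) (hF : DL (n + 1) F) :
    ip L F (p n) = cf n F * ip L (p n) (p n) := by
  have h := orth_low L p hm hd ho n n le_rfl _ (DL_sub p hm hd n hF)
  rw [ip_sub_left, ip_cst_left] at h
  exact sub_eq_zero.mp h

end orth

theorem star_X : star (X : ℂ[X]) = X := by simp [star_def]

theorem star_twoX : star (2 * X : ℂ[X]) = 2 * X := by simp [star_def]

theorem ip_ibp (L F G : Matrix (Fin N) (Fin N) ℂ[X]) (A : Matrix (Fin N) (Fin N) ℂ)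
    (hL : dd L = cst A * L) :
    ip L (dd F) G + ip L (F * cst A) G + ip L F (G * cst A) + ip L F (dd G) =
      ip L F ((2 * X : ℂ[X]) • G) := by
  have h := gL_dd (F * (L * Lᴴ) * Gᴴ)
  have h2 : dd (F * (L * Lᴴ) * Gᴴ) = dd F * (L * Lᴴ) * Gᴴ + (F * cst A) * (L * Lᴴ) * Gᴴ
      + F * (L * Lᴴ) * (G * cst A)ᴴ + F * (L * Lᴴ) * (dd G)ᴴ := by
    simp only [dd_mul, dd_star, hL, Matrix.conjTranspose_mul]
    noncomm_ring
  rw [h2, gL_add, gL_add, gL_add] at h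
  unfold ip
  rw [h, Matrix.conjTranspose_smul, star_twoX, mul_smul_comm]

section main
variable (L : Matrix (Fin N) (Fin N) ℂ[X]) (p : ℕ → Matrix (Fin N) (Fin N) ℂ[X])
  (hm : ∀ n, cf n (p n) = 1) (hd : ∀ n, DL (n + 1) (p n))
  (ho : ∀ n m, n ≠ m → ip L (p n) (p m) = 0)
  (A k0 k1 : Matrix (Fin N) (Fin N) ℂ)
  (hL : dd L = cst A * L) (hc : cst A * L = L * cst A)
  (hK : L * cst Aᴴ = (cst k0 + (X : ℂ[X]) • cst k1 - (X : ℂ[X]) • (X : ℂ[X]) • cst A) * L)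

theorem cf_twoX_succ (n : ℕ) (G : Matrix (Fin N) (Fin N) ℂ[X]) :
    cf (n + 1) ((2 * X : ℂ[X]) • G) = (2 : ℂ) • cf n G := by
  ext1 i j
  rw [cf_apply, Matrix.smul_apply, smul_eq_mul, mul_assoc, ← C_ofNat, coeff_C_mul,
    coeff_X_mul, Matrix.smul_apply, cf_apply, smul_eq_mul]

theorem ip_star_eq {F G : Matrix (Fin N) (Fin N) ℂ[X]} {M : Matrix (Fin N) (Fin N) ℂ}
    (h : ip L F G = M) : ip L G F = Mᴴ := by rw [← h, ip_star]

theorem DL_mono {m n : ℕ} (h : m ≤ n) {F : Matrix (Fin N) (Fin N) ℂ[X]} (hF : DL m F) :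
    DL n F := fun k hk => hF k (h.trans hk)

theorem DL_cst_mul {n : ℕ} (a : Matrix (Fin N) (Fin N) ℂ) {F : Matrix (Fin N) (Fin N) ℂ[X]}
    (hF : DL n F) : DL n (cst a * F) := fun k hk => by rw [cf_cst_mul, hF k hk, mul_zero]

theorem DL_mul_cst {n : ℕ} (a : Matrix (Fin N) (Fin N) ℂ) {F : Matrix (Fin N) (Fin N) ℂ[X]}
    (hF : DL n F) : DL n (F * cst a) := fun k hk => by rw [cf_mul_cst, hF k hk, zero_mul]

theorem DL_dd {n : ℕ} {F : Matrix (Fin N) (Fin N) ℂ[X]}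
    (hF : DL (n + 1) F) : DL n (dd F) := fun k hk => by
  rw [cf_dd, hF (k + 1) (by omega), smul_zero]

theorem DL_X {n : ℕ} {F : Matrix (Fin N) (Fin N) ℂ[X]}
    (hF : DL n F) : DL (n + 1) ((X : ℂ[X]) • F) := fun k hk => by
  obtain ⟨k, rfl⟩ : ∃ l, k = l + 1 := ⟨k - 1, by omega⟩
  rw [cf_X_succ, hF k (by omega)]

theorem DL_twoX {n : ℕ} {F : Matrix (Fin N) (Fin N) ℂ[X]}
    (hF : DL n F) : DL (n + 1) ((2 * X : ℂ[X]) • F) := fun k hk => by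
  obtain ⟨k, rfl⟩ : ∃ l, k = l + 1 := ⟨k - 1, by omega⟩
  rw [cf_twoX_succ, hF k (by omega), smul_zero]

include hm hd ho in
theorem orth_low' (n k : ℕ) (hk : k ≤ n) (F : Matrix (Fin N) (Fin N) ℂ[X]) (hF : DL k F) :
    ip L (p n) F = 0 := by
  rw [ip_star_eq L (orth_low L p hm hd ho n k hk F hF), conjTranspose_zero]

include hm hd ho hL in
/-- First relation. -/
theorem rel_one (n : ℕ) :
    (2 : ℂ) • ip L (p (n + 1)) (p (n + 1)) =
      (((n : ℂ) + 1) • 1 + cf n (p (n + 1)) * A - A * cf n (p (n + 1))) *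
        ip L (p n) (p n) := by
  have h := ip_ibp L (p (n + 1)) (p n) A hL
  rw [orth_low' L p hm hd ho (n + 1) (n + 1) le_rfl _ (DL_mul_cst A (hd n)),
    orth_low' L p hm hd ho (n + 1) (n + 1) le_rfl _
      (DL_mono (Nat.le_succ n) (DL_dd (hd n))),
    ip_star_eq L (orth_top L p hm hd ho (n + 1) _ (DL_twoX (hd n))),
    cf_twoX_succ, hm, add_zero, add_zero] at h
  have h3 : ip L (cst A * p (n + 1)) (p n) = 0 := by
    rw [ip_cst_left, ho _ _ (by omega), mul_zero]
  have h4 : ip L (dd (p (n + 1)) + p (n + 1) * cst A - cst A * p (n + 1)) (p n) =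
      (2 : ℂ) • ip L (p (n + 1)) (p (n + 1)) := by
    rw [ip_sub_left, ip_add_left, h3, h, sub_zero]
    simp [ip_star]
  rw [← h4, orth_top L p hm hd ho n]
  · simp [cf_sub, cf_add, cf_dd, cf_mul_cst, cf_cst_mul, hm]
  · intro m hmn
    rw [cf_sub, cf_add, cf_dd, cf_mul_cst, cf_cst_mul, hd _ (m + 1) (by omega)]
    rcases Nat.eq_or_lt_of_le hmn with rfl | h'
    · simp [hm]
    · simp [hd (n + 1) m (by omega)]

include hm hd ho hL hc hK in
/-- Second relation. -/
theorem rel_two (n : ℕ) :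
    ip L (p (n + 2)) (p (n + 2)) * Aᴴ =
      (((n : ℂ) + 1) • cf (n + 1) (p (n + 2)) - ((n : ℂ) + 2) • cf n (p (n + 1))) *
        ip L (p n) (p n) := by
  have h := ip_ibp L (p (n + 2)) (p n) A hL
  rw [orth_low' L p hm hd ho (n + 2) (n + 1) (by omega) _ (DL_mul_cst A (hd n)),
    orth_low' L p hm hd ho (n + 2) (n + 1) (by omega) _
      (DL_mono (Nat.le_succ n) (DL_dd (hd n))),
    orth_low' L p hm hd ho (n + 2) (n + 2) le_rfl _ (DL_twoX (hd n)), add_zero, add_zero] at h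
  set K := cst k0 + (X : ℂ[X]) • cst k1 - (X : ℂ[X]) • (X : ℂ[X]) • cst A with hKdef
  have h1 : ip L (p (n + 2) * cst A) (p n) = ip L (p (n + 2)) (p n * K) := by
    unfold ip
    have e : cst A * (L * Lᴴ) = (L * Lᴴ) * Kᴴ := by
      rw [← mul_assoc, hc, mul_assoc, mul_assoc, ← Matrix.conjTranspose_mul, ← hK,
        Matrix.conjTranspose_mul, cst_star, Matrix.conjTranspose_conjTranspose]
    rw [mul_assoc (p (n + 2)) (cst A), e, Matrix.conjTranspose_mul]
    simp only [mul_assoc]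
  have hpK : p n * K = p n * cst k0 + (X : ℂ[X]) • (p n * cst k1) -
      (X : ℂ[X]) • (X : ℂ[X]) • (p n * cst A) := by
    rw [hKdef, mul_sub, mul_add]
    simp only [mul_smul_comm]
  have hDK : DL (n + 2 + 1) (p n * K) := by
    intro m hmn
    rw [hpK, cf_sub, cf_add, DL_mul_cst k0 (hd n) m (by omega),
      DL_X (DL_mul_cst k1 (hd n)) m (by omega), DL_X (DL_X (DL_mul_cst A (hd n))) m (by omega)]
    simp
  have hcK : cf (n + 2) (p n * K) = -A := by
    rw [hpK, cf_sub, cf_add, DL_mul_cst k0 (hd n) (n + 2) (by omega),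
      DL_X (DL_mul_cst k1 (hd n)) (n + 2) (by omega), cf_X_succ, cf_X_succ, cf_mul_cst, hm]
    simp
  have h2 := ip_star_eq L (orth_top L p hm hd ho (n + 2) _ hDK)
  rw [hcK, Matrix.conjTranspose_mul, ip_star] at h2
  rw [h1, h2] at h
  have h3 : ip L (dd (p (n + 2)) - cst (((n : ℂ) + 2) • 1) * p (n + 1)) (p n) =
      ip L (p (n + 2)) (p (n + 2)) * Aᴴ := by
    rw [ip_sub_left, ip_cst_left, ho (n + 1) n (by omega), mul_zero, sub_zero]
    rw [Matrix.conjTranspose_neg, mul_neg, ← sub_eq_add_neg] at h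
    exact sub_eq_zero.mp h
  rw [← h3, orth_top L p hm hd ho n]
  · simp [cf_sub, cf_dd, cf_cst_mul]
  · intro m hmn
    rw [cf_sub, cf_dd, cf_cst_mul]
    rcases Nat.eq_or_lt_of_le hmn with rfl | h'
    · simp [hm]
      have : (n : ℂ) + 1 + 1 = n + 2 := by ring
      rw [this, sub_self]
    · simp [hd (n + 1) m (by omega), hd (n + 2) (m + 1) (by omega)]

include hm hd ho hL hc hK in
theorem final_rel (hu : ∀ n, IsUnit (ip L (p n) (p n)).det) (n : ℕ) :
    ((2 * (n + 1) : ℂ)) • (ip L (p (n + 1)) (p (n + 1)))⁻¹ -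
        ((2 * (n + 2) : ℂ)) •
          ((ip L (p (n + 2)) (p (n + 2)))⁻¹ *
            ip L (p (n + 1)) (p (n + 1)) * (ip L (p n) (p n))⁻¹) +
        (ip L (p (n + 2)) (p (n + 2)))⁻¹ * A *
          ip L (p (n + 2)) (p (n + 2)) * Aᴴ * (ip L (p n) (p n))⁻¹ -
        Aᴴ * (ip L (p n) (p n))⁻¹ * A = 0 := by
  have r1 := rel_one L p hm hd ho A hL n
  have r1' := rel_one L p hm hd ho A hL (n + 1)
  have r2 := rel_two L p hm hd ho A k0 k1 hL hc hK n
  have u0 := hu n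
  have u1 := hu (n + 1)
  have u2 := hu (n + 2)
  rw [show n + 1 + 1 = n + 2 from rfl] at r1'
  generalize ip L (p n) (p n) = H0 at *
  generalize ip L (p (n + 1)) (p (n + 1)) = H1 at *
  generalize ip L (p (n + 2)) (p (n + 2)) = H2 at *
  generalize cf n (p (n + 1)) = x1 at *
  generalize cf (n + 1) (p (n + 2)) = x2 at *
  have e1 : (2 : ℂ) • (H1 * H0⁻¹) = ((n : ℂ) + 1) • 1 + x1 * A - A * x1 := by
    rw [← smul_mul_assoc, r1, Matrix.mul_nonsing_inv_cancel_right _ _ u0]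
  have e2 : (2 : ℂ) • (H2 * H1⁻¹) = (((n + 1 : ℕ) : ℂ) + 1) • 1 + x2 * A - A * x2 := by
    rw [← smul_mul_assoc, r1', Matrix.mul_nonsing_inv_cancel_right _ _ u1]
  have e3 : H2 * Aᴴ * H0⁻¹ = ((n : ℂ) + 1) • x2 - ((n : ℂ) + 2) • x1 := by
    rw [r2, Matrix.mul_nonsing_inv_cancel_right _ _ u0]
  have key : ((n : ℂ) + 1) • ((2 : ℂ) • (H2 * H1⁻¹)) - ((n : ℂ) + 2) • ((2 : ℂ) • (H1 * H0⁻¹))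
      + A * (H2 * Aᴴ * H0⁻¹) - (H2 * Aᴴ * H0⁻¹) * A = 0 := by
    rw [e1, e2, e3]
    simp only [mul_sub, sub_mul, smul_mul_assoc, mul_smul_comm]
    push_cast
    module
  have h := congrArg (fun M => H2⁻¹ * M) key
  simp only [mul_zero] at h
  rw [← h]
  have c1 : H2⁻¹ * (H2 * H1⁻¹) = H1⁻¹ := Matrix.nonsing_inv_mul_cancel_left _ _ u2
  have c2 : H2⁻¹ * (H2 * Aᴴ * H0⁻¹ * A) = Aᴴ * H0⁻¹ * A := by
    rw [mul_assoc, mul_assoc, Matrix.nonsing_inv_mul_cancel_left _ _ u2, mul_assoc]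
  rw [mul_sub H2⁻¹, mul_add H2⁻¹, mul_sub H2⁻¹, c2]
  simp only [mul_smul_comm, c1, smul_smul]
  rw [mul_comm (2 : ℂ), mul_comm (2 : ℂ)]
  simp only [mul_assoc]

end main

/-! ### Normalised Hermite polynomials -/

/-- `H_m / m!`. -/
noncomputable def gH : ℕ → ℂ[X]
  | 0 => 1
  | 1 => 2 * X
  | (m + 2) => C (1 / ((m : ℂ) + 2)) * (2 * X * gH (m + 1) - 2 * gH m)

/-- `H_m / m!`, extended by zero to negative `m`. -/
noncomputable def hZ (m : ℤ) : ℂ[X] := if m < 0 then 0 else gH m.toNat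

theorem hZ_nat (m : ℕ) : hZ (m : ℤ) = gH m := by simp [hZ]

theorem hZ_neg {m : ℤ} (h : m < 0) : hZ m = 0 := by simp [hZ, h]

theorem gH_rec (m : ℕ) : ((m : ℂ[X]) + 2) * gH (m + 2) = 2 * X * gH (m + 1) - 2 * gH m := by
  have h0 : ((m : ℂ) + 2) ≠ 0 := by exact_mod_cast (by omega : m + 2 ≠ 0)
  have h1 : ((m : ℂ[X]) + 2) = C ((m : ℂ) + 2) := by simp [C_ofNat]
  rw [gH, h1, ← mul_assoc, ← C_mul, mul_one_div_cancel h0, C_1, one_mul]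

theorem hZ_rec (m : ℤ) : (m : ℂ[X]) * hZ m = 2 * X * hZ (m - 1) - 2 * hZ (m - 2) := by
  rcases lt_or_ge m 0 with h | h
  · rw [hZ_neg h, hZ_neg (by omega), hZ_neg (by omega)]; ring
  · obtain ⟨k, rfl⟩ := Int.eq_ofNat_of_zero_le h
    match k with
    | 0 => rw [hZ_neg (m := _ - 1) (by simp), hZ_neg (m := _ - 2) (by simp)]; simp
    | 1 =>
      rw [hZ_neg (m := _ - 2) (by simp), hZ_nat]
      have : (((1 : ℕ) : ℤ) - 1) = ((0 : ℕ) : ℤ) := by simp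
      rw [this, hZ_nat]
      simp [gH]
    | k + 2 =>
      have e1 : (((k + 2 : ℕ) : ℤ) - 1) = ((k + 1 : ℕ) : ℤ) := by push_cast; ring
      have e2 : (((k + 2 : ℕ) : ℤ) - 2) = ((k : ℕ) : ℤ) := by push_cast; ring
      rw [e1, e2, hZ_nat, hZ_nat, hZ_nat, ← gH_rec]
      push_cast; ring

theorem gH_deriv (m : ℕ) : derivative (gH (m + 1)) = 2 * gH m := by
  induction m using Nat.twoStepInduction with
  | zero => simp [gH]
  | one =>
    have h := congrArg derivative (gH_rec 0)
    simp [gH] at h ⊢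
    have h0 : (2 : ℂ[X]) ≠ 0 := two_ne_zero
    apply mul_left_cancel₀ h0
    linear_combination h
  | more k h1 h2 =>
    have h := congrArg derivative (gH_rec (k + 1))
    have h3 := gH_rec k
    simp only [derivative_mul, derivative_sub, derivative_add, derivative_natCast,
      derivative_ofNat, derivative_X, h1, h2] at h
    have h0 : ((k : ℂ[X]) + 3) ≠ 0 := by exact_mod_cast (by omega : k + 3 ≠ 0)
    apply mul_left_cancel₀ h0
    push_cast at h
    linear_combination h - 2 * h3

theorem hZ_deriv (m : ℤ) : derivative (hZ m) = 2 * hZ (m - 1) := by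
  rcases lt_or_ge m 0 with h | h
  · rw [hZ_neg h, hZ_neg (by omega)]; simp
  · obtain ⟨k, rfl⟩ := Int.eq_ofNat_of_zero_le h
    match k with
    | 0 => rw [hZ_neg (m := _ - 1) (by simp), hZ_nat]; simp [gH]
    | k + 1 =>
      have e1 : (((k + 1 : ℕ) : ℤ) - 1) = ((k : ℕ) : ℤ) := by push_cast; ring
      rw [e1, hZ_nat, hZ_nat, gH_deriv]

theorem gH_eval (m : ℕ) (x : ℝ) :
    (gH m).eval (x : ℂ) = ((hermiteF m x / Nat.factorial m : ℝ) : ℂ) := by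
  induction m using Nat.twoStepInduction with
  | zero => simp [gH, hermiteF]
  | one => simp [gH, hermiteF]
  | more k h1 h2 =>
    have h0 : ((k : ℂ) + 2) ≠ 0 := by exact_mod_cast (by omega : k + 2 ≠ 0)
    have h01 : ((k : ℂ) + 1) ≠ 0 := by exact_mod_cast (by omega : k + 1 ≠ 0)
    have hf : ((Nat.factorial k : ℕ) : ℂ) ≠ 0 := by exact_mod_cast Nat.factorial_ne_zero k
    have hf1 : ((Nat.factorial (k + 1) : ℕ) : ℂ) = (k + 1) * (Nat.factorial k : ℕ) := by
      rw [Nat.factorial_succ]; push_cast; ring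
    have hf2 : ((Nat.factorial (k + 2) : ℕ) : ℂ) = (k + 2) * ((k + 1) * (Nat.factorial k : ℕ)) := by
      rw [Nat.factorial_succ, Nat.factorial_succ]; push_cast; ring
    rw [gH, hermiteF]
    simp only [eval_mul, eval_C, eval_sub, eval_ofNat, eval_X, h1, h2]
    push_cast
    rw [hf1, hf2]
    field_simp

/-! ### Matrices with entries `(α_j/α_k) f(j,k)` -/

/-- Template matrix. -/
noncomputable def Tm (α : Fin N → ℝ) (f : ℤ → ℤ → ℂ[X]) : Matrix (Fin N) (Fin N) ℂ[X] :=
  Matrix.of fun j k => C ((α j : ℂ) / (α k : ℂ)) * f (j : ℕ) (k : ℕ)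

theorem Tm_apply (α : Fin N → ℝ) (f : ℤ → ℤ → ℂ[X]) (j k : Fin N) :
    Tm α f j k = C ((α j : ℂ) / (α k : ℂ)) * f (j : ℕ) (k : ℕ) := rfl

theorem ev_Lp (α : Fin N → ℝ) (x : ℝ) : ev x (Tm α fun j k => hZ (j - k)) = Lmat N α x := by
  ext1 j k
  rw [ev_apply, Tm_apply, Lmat, Matrix.of_apply]
  split_ifs with h
  · have : ((j : ℕ) : ℤ) - ((k : ℕ) : ℤ) = (((j : ℕ) - (k : ℕ) : ℕ) : ℤ) := by omega
    rw [this, hZ_nat, eval_mul, eval_C, gH_eval]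
    push_cast; ring
  · rw [hZ_neg (by omega)]; simp

section temp
variable (α : Fin N → ℝ) (hα : ∀ j, 0 < α j)

include hα in
theorem A_mul_Tm (f : ℤ → ℤ → ℂ[X]) (hf : ∀ k : ℕ, f (-1) k = 0) :
    cst (Amat N α) * Tm α f = Tm α (fun j k => 2 * f (j - 1) k) := by
  have hne : ∀ j, (α j : ℂ) ≠ 0 := fun j => by exact_mod_cast (hα j).ne'
  ext1 j k
  rw [Matrix.mul_apply]
  simp only [cst_apply, Amat, Matrix.of_apply, Tm_apply]
  by_cases hj : (j : ℕ) = 0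
  · rw [Finset.sum_eq_zero]
    · simp [hj, hf]
    · intro i _
      rw [if_neg (by omega)]; simp
  · rw [Finset.sum_eq_single (⟨(j : ℕ) - 1, by omega⟩ : Fin N)]
    · have e : (((j : ℕ) - 1 : ℕ) : ℤ) = ((j : ℕ) : ℤ) - 1 := by omega
      rw [if_pos (by simp; omega), ← mul_assoc, ← C_mul, ← mul_assoc]
      simp only [e]
      congr 1
      rw [← C_ofNat, ← C_mul]
      congr 1
      have h1 := hne ⟨(j : ℕ) - 1, by omega⟩
      have h2 := hne k
      push_cast
      field_simp
    · intro i _ hi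
      rw [if_neg (fun h => hi (Fin.ext (by simp; omega)))]; simp
    · simp

include hα in
theorem Tm_mul_A (f : ℤ → ℤ → ℂ[X]) (hf : ∀ j : Fin N, f (j : ℕ) N = 0) :
    Tm α f * cst (Amat N α) = Tm α (fun j k => 2 * f j (k + 1)) := by
  have hne : ∀ j, (α j : ℂ) ≠ 0 := fun j => by exact_mod_cast (hα j).ne'
  ext1 j k
  rw [Matrix.mul_apply]
  simp only [cst_apply, Amat, Matrix.of_apply, Tm_apply]
  by_cases hk : (k : ℕ) + 1 = N
  · rw [Finset.sum_eq_zero]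
    · have e : ((k : ℕ) : ℤ) + 1 = (N : ℤ) := by omega
      rw [e, hf]; simp
    · intro i _
      rw [if_neg (by omega)]; simp
  · rw [Finset.sum_eq_single (⟨(k : ℕ) + 1, by omega⟩ : Fin N)]
    · rw [if_pos (by simp)]
      have h1 := hne ⟨(k : ℕ) + 1, by omega⟩
      have h2 := hne k
      rw [mul_right_comm, ← C_mul, ← mul_assoc, ← C_ofNat, ← C_mul]
      push_cast
      congr 2
      field_simp
    · intro i _ hi
      rw [if_neg (fun h => hi (Fin.ext (by simp; omega)))]; simp
    · simp

variable (hspec : ∀ j k : Fin N, (j : ℕ) = (k : ℕ) + 1 →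
      2 * α j / α k = Real.sqrt ((j : ℕ) * (N - (j : ℕ))))

include hα hspec in
theorem spec_sq (j k : Fin N) (h : (j : ℕ) = (k : ℕ) + 1) :
    4 * (α j : ℂ) ^ 2 = (((k : ℕ) : ℂ) + 1) * (N - ((k : ℕ) : ℂ) - 1) * (α k : ℂ) ^ 2 := by
  have h1 := hspec j k h
  have hk := (hα k).ne'
  have h2 : (2 * α j / α k) ^ 2 = ((j : ℕ) : ℝ) * (N - ((j : ℕ) : ℝ)) := by
    rw [h1, Real.sq_sqrt]
    have : ((j : ℕ) : ℝ) ≤ N := by exact_mod_cast j.2.le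
    exact mul_nonneg (Nat.cast_nonneg _) (by linarith)
  have h3 : 4 * (α j) ^ 2 = (((k : ℕ) : ℝ) + 1) * (N - ((k : ℕ) : ℝ) - 1) * (α k) ^ 2 := by
    rw [h] at h2
    push_cast at h2
    field_simp at h2
    linear_combination h2
  exact_mod_cast h3

include hα hspec in
theorem As_mul_Tm (f : ℤ → ℤ → ℂ[X]) :
    cst (Amat N α)ᴴ * Tm α f =
      Tm α (fun j k => C (1 / 2) * (((j : ℂ[X]) + 1) * ((N : ℂ[X]) - (j : ℂ[X]) - 1)) * f (j + 1) k) := by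
  have hne : ∀ j, (α j : ℂ) ≠ 0 := fun j => by exact_mod_cast (hα j).ne'
  ext1 j k
  rw [Matrix.mul_apply]
  simp only [cst_apply, Amat, Matrix.of_apply, Tm_apply, Matrix.conjTranspose_apply]
  by_cases hk : (j : ℕ) + 1 = N
  · rw [Finset.sum_eq_zero]
    · have e : (N : ℂ[X]) = (j : ℕ) + 1 := by exact_mod_cast hk.symm
      rw [e]; push_cast; ring
    · intro i _
      rw [if_neg (by omega)]; simp
  · rw [Finset.sum_eq_single (⟨(j : ℕ) + 1, by omega⟩ : Fin N)]
    · rw [if_pos (by simp)]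
      have h1 := hne ⟨(j : ℕ) + 1, by omega⟩
      have h2 := hne k
      have h3 := hne j
      have h4 := spec_sq α hα hspec ⟨(j : ℕ) + 1, by omega⟩ j rfl
      have e : (((j : ℕ) : ℤ) : ℂ[X]) = C ((j : ℕ) : ℂ) := by simp
      have e2 : (N : ℂ[X]) = C (N : ℂ) := by simp
      rw [← mul_assoc, ← C_mul, ← mul_assoc, e, e2]
      simp only [← C_1, ← C_add, ← C_sub, ← C_mul]
      push_cast
      congr 2
      simp only [RCLike.star_def, map_mul, map_div₀, Complex.conj_ofReal, map_ofNat]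
      field_simp
      linear_combination h4
    · intro i _ hi
      rw [if_neg (fun h => hi (Fin.ext (by simp; omega)))]; simp
    · simp

include hα hspec in
theorem Tm_mul_As (f : ℤ → ℤ → ℂ[X]) :
    Tm α f * cst (Amat N α)ᴴ =
      Tm α (fun j k => C (1 / 2) * ((k : ℂ[X]) * ((N : ℂ[X]) - (k : ℂ[X]))) * f j (k - 1)) := by
  have hne : ∀ j, (α j : ℂ) ≠ 0 := fun j => by exact_mod_cast (hα j).ne'
  ext1 j k
  rw [Matrix.mul_apply]
  simp only [cst_apply, Amat, Matrix.of_apply, Tm_apply, Matrix.conjTranspose_apply]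
  by_cases hk : (k : ℕ) = 0
  · rw [Finset.sum_eq_zero]
    · simp [hk]
    · intro i _
      rw [if_neg (by omega)]; simp
  · obtain ⟨l, hl⟩ : ∃ l, (k : ℕ) = l + 1 := ⟨(k : ℕ) - 1, by omega⟩
    rw [Finset.sum_eq_single (⟨l, by omega⟩ : Fin N)]
    · rw [if_pos (by simp; omega)]
      have h1 := hne ⟨l, by omega⟩
      have h2 := hne k
      have h3 := hne j
      have h4 := spec_sq α hα hspec k ⟨l, by omega⟩ hl
      have e : (((k : ℕ) : ℤ) : ℂ[X]) = C ((l : ℂ) + 1) := by rw [hl]; simp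
      have e2 : (N : ℂ[X]) = C (N : ℂ) := by simp
      have e3 : ((k : ℕ) : ℤ) - 1 = (l : ℤ) := by omega
      rw [mul_right_comm, ← C_mul, ← mul_assoc, e, e2, e3]
      simp only [← C_1, ← C_add, ← C_sub, ← C_mul]
      push_cast
      congr 2
      simp only [RCLike.star_def, map_mul, map_div₀, Complex.conj_ofReal, map_ofNat]
      simp only at h4
      field_simp
      linear_combination h4
    · intro i _ hi
      rw [if_neg (fun h => hi (Fin.ext (by simp; omega)))]; simp
    · simp

/-- The diagonal matrix `2J - (N+1)`. -/
noncomputable def Hd (N : ℕ) : Matrix (Fin N) (Fin N) ℂ :=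
  Matrix.diagonal fun j => 2 * ((j : ℕ) : ℂ) + 1 - N

theorem Hd_mul_Tm (f : ℤ → ℤ → ℂ[X]) :
    cst (Hd N) * Tm α f = Tm α (fun j k => (2 * (j : ℂ[X]) + 1 - N) * f j k) := by
  have e : cst (Hd N) = Matrix.diagonal fun j : Fin N => C (2 * ((j : ℕ) : ℂ) + 1 - N) := by
    ext1 i j
    rw [cst_apply, Hd, Matrix.diagonal_apply, Matrix.diagonal_apply]
    split_ifs <;> simp
  ext1 j k
  rw [e, Matrix.diagonal_mul, Tm_apply, Tm_apply]
  simp only [C_sub, C_add, C_mul, C_ofNat, C_1, map_natCast, Int.cast_natCast]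
  ring

theorem Tm_congr {f g : ℤ → ℤ → ℂ[X]} (h : ∀ j k, f j k = g j k) : Tm α f = Tm α g := by
  have : f = g := by funext j k; exact h j k
  rw [this]

theorem Tm_add (f g : ℤ → ℤ → ℂ[X]) : Tm α f + Tm α g = Tm α (fun j k => f j k + g j k) := by
  ext1 j k; simp [Tm_apply, mul_add]

theorem Tm_sub (f g : ℤ → ℤ → ℂ[X]) : Tm α f - Tm α g = Tm α (fun j k => f j k - g j k) := by
  ext1 j k; simp [Tm_apply, mul_sub]

theorem Tm_smul (c : ℂ[X]) (f : ℤ → ℤ → ℂ[X]) : c • Tm α f = Tm α (fun j k => c * f j k) := by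
  ext1 j k
  simp [Tm_apply]
  ring

/-- Polynomial version of `L`. -/
noncomputable def Lp : Matrix (Fin N) (Fin N) ℂ[X] := Tm α fun j k => hZ (j - k)

include hα in
theorem Lp_deriv : dd (Lp α) = cst (Amat N α) * Lp α := by
  rw [Lp, A_mul_Tm α hα _ (fun k => hZ_neg (by omega))]
  ext1 j k
  rw [dd_apply, Tm_apply, Tm_apply, derivative_C_mul, hZ_deriv]
  rw [sub_right_comm]

include hα in
theorem Lp_comm : cst (Amat N α) * Lp α = Lp α * cst (Amat N α) := by
  rw [Lp, A_mul_Tm α hα _ (fun k => hZ_neg (by omega)),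
    Tm_mul_A α hα _ (fun j => hZ_neg (by omega))]
  refine Tm_congr α fun j k => ?_
  rw [sub_right_comm, sub_sub]

include hα hspec in
theorem Lp_key : Lp α * cst (Amat N α)ᴴ =
    (cst ((Amat N α)ᴴ - (1 / 4 : ℂ) • (Amat N α * Hd N + Hd N * Amat N α +
        Amat N α * (Amat N α * Amat N α))) +
      (X : ℂ[X]) • cst (Hd N + Amat N α * Amat N α) -
      (X : ℂ[X]) • (X : ℂ[X]) • cst (Amat N α)) * Lp α := by
  have hs : ∀ M : Matrix (Fin N) (Fin N) ℂ, cst ((1 / 4 : ℂ) • M) = (C (1 / 4) : ℂ[X]) • cst M := by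
    intro M; ext1 i j; simp [cst_apply]
  simp only [map_sub, map_add, map_mul, hs, sub_mul, add_mul, smul_mul_assoc, mul_assoc]
  have b : ∀ k : ℕ, hZ (-1 - (k : ℤ)) = 0 := fun k => hZ_neg (by omega)
  have b2 : ∀ k : ℕ, hZ (-1 - 1 - (k : ℤ)) = 0 := fun k => hZ_neg (by omega)
  have b3 : ∀ k : ℕ, hZ (-1 - 1 - 1 - (k : ℤ)) = 0 := fun k => hZ_neg (by omega)
  simp only [Lp]
  rw [Tm_mul_As α hα hspec, As_mul_Tm α hα hspec, Hd_mul_Tm,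
    A_mul_Tm α hα _ (fun k => by rw [b, mul_zero]), A_mul_Tm α hα _ b,
    A_mul_Tm α hα _ (fun k => by rw [b2, mul_zero]),
    A_mul_Tm α hα _ (fun k => by rw [b3, mul_zero, mul_zero]), Hd_mul_Tm]
  simp only [Tm_add, Tm_smul, Tm_sub]
  refine Tm_congr α fun j k => ?_
  have r0 := hZ_rec (j + 1 - k)
  have r1 := hZ_rec (j - k)
  have r2 := hZ_rec (j - 1 - k)
  rw [show j + 1 - k - 1 = j - k by ring, show j + 1 - k - 2 = j - 1 - k by ring] at r0
  rw [show j - k - 1 = j - 1 - k by ring, show j - k - 2 = j - 1 - 1 - k by ring] at r1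
  rw [show j - 1 - k - 1 = j - 1 - 1 - k by ring, show j - 1 - k - 2 = j - 1 - 1 - 1 - k by ring] at r2
  rw [show j - (k - 1) = j + 1 - k by ring]
  push_cast at r0 r1 r2 ⊢
  generalize hZ (j + 1 - k) = h0 at *
  generalize hZ (j - k) = h1 at *
  generalize hZ (j - 1 - k) = h2 at *
  generalize hZ (j - 1 - 1 - k) = h3 at *
  generalize hZ (j - 1 - 1 - 1 - k) = h4 at *
  have q4 : (4 : ℂ[X]) * C (1 / 4) = 1 := by
    rw [← C_ofNat, ← C_mul]; norm_num
  have q2 : C (1 / 2 : ℂ) = 2 * C (1 / 4) := by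
    rw [← C_ofNat, ← C_mul]; norm_num
  rw [q2]
  generalize C (1 / 4 : ℂ) = q at *
  generalize (j : ℂ[X]) = J at *
  generalize (k : ℂ[X]) = K at *
  generalize (N : ℂ[X]) = M at *
  linear_combination (2 * q * (J + 1 + K - M)) * r0 - 4 * q * X * r1 + 4 * q * r2 +
    (X * (2 * J + 1 - M) * h1 - 2 * X ^ 2 * h2 + 4 * X * h3) * q4

end temp

theorem matIP_eq (α : Fin N → ℝ) (F G : Matrix (Fin N) (Fin N) ℂ[X])
    (f g : ℝ → Matrix (Fin N) (Fin N) ℂ) (hf : ∀ x, f x = ev x F) (hg : ∀ x, g x = ev x G) :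
    matIP N (hermW N α) f g = ip (Lp α) F G := by
  rw [ip, ← matInt_ev, matIP]
  congr 1
  funext y
  rw [map_mul, map_mul, map_mul, ev_star, ev_star, hf, hg, hermW, Lp, ev_Lp]
  rw [mul_smul_comm, smul_mul_assoc]

theorem exists_poly (n : ℕ) (f : ℝ → Matrix (Fin N) (Fin N) ℂ) (h : IsMonicMatPoly N n f) :
    ∃ F : Matrix (Fin N) (Fin N) ℂ[X], cf n F = 1 ∧ DL (n + 1) F ∧ ∀ x, f x = ev x F := by
  obtain ⟨c, hc, hx⟩ := h
  have hcf : ∀ m, cf m (Matrix.of fun i j => ∑ k ∈ Finset.range (n + 1), monomial k (c k i j)) =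
      if m < n + 1 then c m else 0 := by
    intro m
    ext1 i j
    rw [cf_apply, Matrix.of_apply, finsetSum_coeff]
    simp only [coeff_monomial, Finset.sum_ite_eq', Finset.mem_range]
    split_ifs <;> rfl
  refine ⟨Matrix.of fun i j => ∑ k ∈ Finset.range (n + 1), monomial k (c k i j), ?_, ?_, ?_⟩
  · rw [hcf, if_pos (Nat.lt_succ_self n), hc]
  · intro m hm
    rw [hcf, if_neg (by omega)]
  · intro x
    ext1 i j
    rw [hx, ev_apply, Matrix.of_apply, eval_finsetSum, Matrix.sum_apply]
    refine Finset.sum_congr rfl fun k _ => ?_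
    simp [mul_comm]

end HermAux

/-- **Second recursion for the squared norms** (Corollary 6.4 of the paper):
with the special parameters, the squared norms satisfy
`2(n+1)ℋ(n+1)⁻¹ − 2(n+2)ℋ(n+2)⁻¹ℋ(n+1)ℋ(n)⁻¹ + ℋ(n+2)⁻¹Aℋ(n+2)A*ℋ(n)⁻¹
 − A*ℋ(n)⁻¹A = 0`. -/
theorem hermite_norms_second_recursion
    (N : ℕ) (hN : 1 ≤ N) (α : Fin N → ℝ) (hα : ∀ j, 0 < α j)
    (P : ℕ → ℝ → Matrix (Fin N) (Fin N) ℂ)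
    (hPmonic : ∀ n, IsMonicMatPoly N n (P n))
    (hPorth : ∀ n m, n ≠ m → matIP N (hermW N α) (P n) (P m) = 0)
    (hHpos : ∀ n, (matIP N (hermW N α) (P n) (P n)).PosDef)
    (hspec : ∀ j k : Fin N, (j : ℕ) = (k : ℕ) + 1 →
      2 * α j / α k = Real.sqrt ((j : ℕ) * (N - (j : ℕ))))
    :
    ∀ n : ℕ,
      ((2 * (n + 1) : ℂ)) • (matIP N (hermW N α) (P (n + 1)) (P (n + 1)))⁻¹ -
        ((2 * (n + 2) : ℂ)) •
          ((matIP N (hermW N α) (P (n + 2)) (P (n + 2)))⁻¹ *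
            matIP N (hermW N α) (P (n + 1)) (P (n + 1)) *
            (matIP N (hermW N α) (P n) (P n))⁻¹) +
        (matIP N (hermW N α) (P (n + 2)) (P (n + 2)))⁻¹ * Amat N α *
          matIP N (hermW N α) (P (n + 2)) (P (n + 2)) * (Amat N α)ᴴ *
          (matIP N (hermW N α) (P n) (P n))⁻¹ -
        (Amat N α)ᴴ * (matIP N (hermW N α) (P n) (P n))⁻¹ * Amat N α = 0 := by
  choose p hm hd he using fun n => HermAux.exists_poly n (P n) (hPmonic n)
  have hip : ∀ n m, matIP N (hermW N α) (P n) (P m) = HermAux.ip (HermAux.Lp α) (p n) (p m) :=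
    fun n m => HermAux.matIP_eq α _ _ _ _ (he n) (he m)
  intro n
  have hu : ∀ n, IsUnit (HermAux.ip (HermAux.Lp α) (p n) (p n)).det := by
    intro n
    rw [← hip]
    exact (Matrix.isUnit_iff_isUnit_det _).mp (hHpos n).isUnit
  simp only [hip]
  exact HermAux.final_rel (HermAux.Lp α) p hm hd (fun n m h => by rw [← hip]; exact hPorth n m h)
    (Amat N α) _ _ (HermAux.Lp_deriv α hα) (HermAux.Lp_comm α hα)
    (HermAux.Lp_key α hα hspec) hu n
end
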